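/- arXiv:1704.07630 — 7 statements merged into one kernel-verified Lean document; each statement's English description precedes it below -/
import Mathlib

section
/- For every (m,n)-Dyck path π, |i(π)| + |o(π)| = (m−1)(n−1)/2. -/
/-- An `(m,n)`-Dyck path is encoded by the weakly increasing sequence `y 1 ≤ … ≤ y m = n`
of heights of its east steps (with the convention `y 0 = 0`), subject to `m * y c ≥ n * c`.
The north steps of the path are the pairs `(c, j)` with `0 ≤ c < m` and
`y c ≤ j < y (c+1)`, representing the unit north step from `(c, j)` to `(c, j+1)`. -/
def northSteps (m n : ℕ) (y : ℕ → ℕ) : Finset (ℕ × ℕ) :=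
  (Finset.range m ×ˢ Finset.range n).filter fun s => y s.1 ≤ s.2 ∧ s.2 < y (s.1 + 1)

/-- The east steps of the path are indexed by `c` with `1 ≤ c ≤ m`; the east step `c`
goes from `(c-1, y c)` to `(c, y c)`. -/
def eastSteps (m : ℕ) : Finset ℕ := Finset.Icc 1 m

/-- `o(π)`: pairs `(s₁, s₂)` of an east step `s₁` and a north step `s₂` of the path
with `s₁` occurring earlier than (to the left of) `s₂` along the path. -/
def oSet (m n : ℕ) (y : ℕ → ℕ) : Finset (ℕ × ℕ × ℕ) :=
  (eastSteps m ×ˢ northSteps m n y).filter fun p => p.1 ≤ p.2.1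

/-- `i(π)`: lattice points `(a,b)` strictly between the path and the diagonal:
`1 ≤ a ≤ m-1`, `m·b > n·a` and `b < y a`. -/
def iSet (m n : ℕ) (y : ℕ → ℕ) : Finset (ℕ × ℕ) :=
  (Finset.Icc 1 (m - 1) ×ˢ Finset.range n).filter fun p =>
    n * p.1 < m * p.2 ∧ p.2 < y p.1

/-- `k(p)` for a lattice point `p = (a,b)`: the number of north steps of the path whose
interior is intersected by the line through `p` parallel to the diagonal,
`m·(y−b) = n·(x−a)`.  A north step `(c,j)` is intersected iff
`m·j < m·b + n·(c−a) < m·(j+1)`. -/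
def kNum (m n : ℕ) (y : ℕ → ℕ) (p : ℕ × ℕ) : ℕ :=
  ((northSteps m n y).filter fun s =>
    (m : ℤ) * s.2 < (m : ℤ) * p.2 + (n : ℤ) * ((s.1 : ℤ) - (p.1 : ℤ)) ∧
    (m : ℤ) * p.2 + (n : ℤ) * ((s.1 : ℤ) - (p.1 : ℤ)) < (m : ℤ) * ((s.2 : ℤ) + 1)).card

/-- `h₊(π)`: the number of pairs `(s₁, s₂) ∈ o(π)` such that some line parallel to the
diagonal meets the interiors of both steps.  For the east step `s₁ = c₁` (at height
`y c₁`) and the north step `s₂ = (c₂, j)` this overlap condition reads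
`m·(y c₁) − n·c₁ < m·(j+1) − n·c₂` and `m·j − n·c₂ < m·(y c₁) − n·(c₁−1)`. -/
def hplus (m n : ℕ) (y : ℕ → ℕ) : ℕ :=
  ((oSet m n y).filter fun p =>
    (m : ℤ) * (y p.1 : ℤ) - (n : ℤ) * (p.1 : ℤ)
        < (m : ℤ) * ((p.2.2 : ℤ) + 1) - (n : ℤ) * (p.2.1 : ℤ) ∧
    (m : ℤ) * (p.2.2 : ℤ) - (n : ℤ) * (p.2.1 : ℤ)
        < (m : ℤ) * (y p.1 : ℤ) - (n : ℤ) * ((p.1 : ℤ) - 1)).card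

/-- The inner vertices of the path: lattice points at which an east step is immediately
followed by a north step, i.e. points `(c, y c)` with `1 ≤ c ≤ m−1` and `y c < y (c+1)`. -/
def innerV (m n : ℕ) (y : ℕ → ℕ) : Finset (ℕ × ℕ) :=
  (Finset.range (m + 1) ×ˢ Finset.range (n + 1)).filter fun v =>
    1 ≤ v.1 ∧ v.1 ≤ m - 1 ∧ v.2 = y v.1 ∧ y v.1 < y (v.1 + 1)

/-- The outer vertices of the path: lattice points at which a north step is immediately
followed by an east step, i.e. points `(c, y (c+1))` with `0 ≤ c ≤ m−1` and
`y c < y (c+1)`. -/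
def outerV (m n : ℕ) (y : ℕ → ℕ) : Finset (ℕ × ℕ) :=
  (Finset.range (m + 1) ×ˢ Finset.range (n + 1)).filter fun v =>
    v.1 ≤ m - 1 ∧ v.2 = y (v.1 + 1) ∧ y v.1 < y (v.1 + 1)

/-- `v^*(π)`: the outer vertices of the path excluding the (unique) outer vertex most
distant from the diagonal, i.e. those outer vertices `v` for which some outer vertex `w`
satisfies `m·y(w) − n·x(w) > m·y(v) − n·x(v)`. -/
def vstar (m n : ℕ) (y : ℕ → ℕ) : Finset (ℕ × ℕ) :=
  (outerV m n y).filter fun v => ∃ w ∈ outerV m n y,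
    (m : ℤ) * (v.2 : ℤ) - (n : ℤ) * (v.1 : ℤ) < (m : ℤ) * (w.2 : ℤ) - (n : ℤ) * (w.1 : ℤ)

/-- A monotone-sequence fact: `y` is monotone on `[0,m]`. -/
theorem dyck_mono (m : ℕ) (y : ℕ → ℕ) (hmono : ∀ c < m, y c ≤ y (c + 1)) (a b : ℕ)
    (hab : a ≤ b) (hb : b ≤ m) : y a ≤ y b := by
  induction b, hab using Nat.le_induction with
  | base => exact le_rfl
  | succ k hk ih => exact (ih (by omega)).trans (hmono k (by omega))

/-- No interior lattice points on the diagonal. -/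
theorem diag_ne (m n a b : ℕ) (hcop : Nat.Coprime m n) (ha : 1 ≤ a) (ham : a ≤ m - 1) :
    n * a ≠ m * b := by
  intro h
  have h1 : m ∣ n * a := ⟨b, h⟩
  have h2 : m ∣ a := hcop.dvd_of_dvd_mul_left h1
  have := Nat.le_of_dvd (by omega) h2
  omega

/-- Lattice points above the diagonal. -/
def aboveSet (m n : ℕ) : Finset (ℕ × ℕ) :=
  (Finset.Icc 1 (m - 1) ×ˢ Finset.Icc 1 (n - 1)).filter fun p => n * p.1 < m * p.2

theorem aboveSet_card (m n : ℕ) (hcop : Nat.Coprime m n) :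
    2 * (aboveSet m n).card = (m - 1) * (n - 1) := by
  have h1 := Finset.card_filter_add_card_filter_not
    (s := Finset.Icc 1 (m - 1) ×ˢ Finset.Icc 1 (n - 1)) (fun p : ℕ × ℕ => n * p.1 < m * p.2)
  rw [Finset.card_product, Nat.card_Icc, Nat.card_Icc] at h1
  have h2 : ((Finset.Icc 1 (m - 1) ×ˢ Finset.Icc 1 (n - 1)).filter
      fun p : ℕ × ℕ => ¬ n * p.1 < m * p.2).card = (aboveSet m n).card := by
    apply Finset.card_bij' (fun p _ => (m - p.1, n - p.2)) (fun p _ => (m - p.1, n - p.2))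
    · rintro ⟨a, b⟩ h
      simp only [aboveSet, Finset.mem_filter, Finset.mem_product, Finset.mem_Icc] at h ⊢
      obtain ⟨⟨⟨h1, h2⟩, h3, h4⟩, h5⟩ := h
      have h6 := diag_ne m n a b hcop h1 h2
      refine ⟨⟨⟨by omega, by omega⟩, by omega, by omega⟩, ?_⟩
      obtain ⟨c, rfl⟩ : ∃ c, m = a + c := ⟨m - a, by omega⟩
      obtain ⟨d, rfl⟩ : ∃ d, n = b + d := ⟨n - b, by omega⟩
      have h7 : (a + c) * b < (b + d) * a := by omega
      simp only [Nat.add_sub_cancel_left]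
      nlinarith
    · rintro ⟨a, b⟩ h
      simp only [aboveSet, Finset.mem_filter, Finset.mem_product, Finset.mem_Icc] at h ⊢
      obtain ⟨⟨⟨h1, h2⟩, h3, h4⟩, h5⟩ := h
      refine ⟨⟨⟨by omega, by omega⟩, by omega, by omega⟩, ?_⟩
      obtain ⟨c, rfl⟩ : ∃ c, m = a + c := ⟨m - a, by omega⟩
      obtain ⟨d, rfl⟩ : ∃ d, n = b + d := ⟨n - b, by omega⟩
      simp only [Nat.add_sub_cancel_left]
      nlinarith
    · rintro ⟨a, b⟩ h
      simp only [Finset.mem_filter, Finset.mem_product, Finset.mem_Icc] at h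
      simp only [Prod.mk.injEq]
      omega
    · rintro ⟨a, b⟩ h
      simp only [aboveSet, Finset.mem_filter, Finset.mem_product, Finset.mem_Icc] at h
      simp only [Prod.mk.injEq]
      omega
  rw [h2] at h1
  simp only [aboveSet, Nat.add_sub_cancel] at h1 ⊢
  omega

/-- For every `(m,n)`-Dyck path `π` (with `m`, `n` coprime positive
integers), `|i(π)| + |o(π)| = (m−1)(n−1)/2`. -/
theorem iSet_card_add_oSet_card (m n : ℕ) (hm : 0 < m) (hn : 0 < n)
    (hcop : Nat.Coprime m n) (y : ℕ → ℕ) (hy0 : y 0 = 0)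
    (hmono : ∀ c < m, y c ≤ y (c + 1)) (hym : y m = n)
    (habove : ∀ c, 1 ≤ c → c ≤ m → n * c ≤ m * y c) :
    (iSet m n y).card + (oSet m n y).card = (m - 1) * (n - 1) / 2 := by
  have hmon := dyck_mono m y hmono
  have hi : iSet m n y = (aboveSet m n).filter fun p => p.2 < y p.1 := by
    ext ⟨a, b⟩
    simp only [iSet, aboveSet, Finset.mem_filter, Finset.mem_product, Finset.mem_Icc,
      Finset.mem_range]
    constructor
    · rintro ⟨⟨h1, h2⟩, h3, h4⟩
      have : b ≠ 0 := by rintro rfl; simp at h3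
      exact ⟨⟨⟨h1, by omega, by omega⟩, h3⟩, h4⟩
    · rintro ⟨⟨⟨h1, h2, h2'⟩, h3⟩, h4⟩
      exact ⟨⟨h1, by omega⟩, h3, h4⟩
  have ho : (oSet m n y).card = ((aboveSet m n).filter fun p => ¬ p.2 < y p.1).card := by
    apply Finset.card_bij (fun p _ => (p.1, p.2.2))
    · rintro ⟨a, c, b⟩ h
      simp only [oSet, northSteps, eastSteps, aboveSet, Finset.mem_filter, Finset.mem_product,
        Finset.mem_Icc, Finset.mem_range] at h ⊢
      obtain ⟨⟨⟨h1, h2⟩, ⟨h3, h4⟩, h5, h6⟩, h7⟩ := h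
      have h8 := hmon a c h7 h3.le
      have h9 := habove a h1 h2
      have h10 : m * y a ≤ m * b := Nat.mul_le_mul_left _ (by omega)
      have h11 := diag_ne m n a b hcop h1 (by omega)
      have h12 : b ≠ 0 := by
        rintro rfl
        have := Nat.mul_pos hn h1
        omega
      refine ⟨⟨⟨⟨h1, by omega⟩, by omega, by omega⟩, by omega⟩, by omega⟩
    · rintro ⟨a, c, b⟩ h ⟨a', c', b'⟩ h' he
      simp only [oSet, northSteps, eastSteps, Finset.mem_filter, Finset.mem_product,
        Finset.mem_Icc, Finset.mem_range, Prod.mk.injEq] at h h' he ⊢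
      obtain ⟨rfl, rfl⟩ := he
      refine ⟨rfl, ?_, rfl⟩
      rcases lt_trichotomy c c' with hc | hc | hc
      · have := hmon (c + 1) c' hc (by omega)
        omega
      · exact hc
      · have := hmon (c' + 1) c hc (by omega)
        omega
    · rintro ⟨a, b⟩ h
      simp only [aboveSet, Finset.mem_filter, Finset.mem_product, Finset.mem_Icc] at h
      obtain ⟨⟨⟨⟨h1, h2⟩, h3, h4⟩, h5⟩, h6⟩ := h
      have hex : ∃ c, a ≤ c ∧ c < m ∧ y c ≤ b ∧ b < y (c + 1) := by
        by_contra! hcon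
        have key : ∀ k, a ≤ k → k ≤ m → y k ≤ b := by
          intro k hk
          induction k, hk using Nat.le_induction with
          | base => intro _; omega
          | succ k hk ih => intro hkm; exact hcon k hk (by omega) (ih (by omega))
        have := key m (by omega) le_rfl
        omega
      obtain ⟨c, hc1, hc2, hc3, hc4⟩ := hex
      refine ⟨(a, c, b), ?_, rfl⟩
      simp only [oSet, northSteps, eastSteps, Finset.mem_filter, Finset.mem_product,
        Finset.mem_Icc, Finset.mem_range]
      refine ⟨⟨⟨h1, by omega⟩, ⟨hc2, by omega⟩, hc3, hc4⟩, hc1⟩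
  rw [hi, ho, Finset.card_filter_add_card_filter_not, ← aboveSet_card m n hcop]
  omega
end

section
/- For every (m,n)-Dyck path π, |o(π)| − h₊(π) = Σ_{p ∈ i(π)} (k(p) − 1). -/
namespace OSetAux

theorem cop_x {m n : ℕ} (hcop : Nat.Coprime m n) {a t b b' : ℤ}
    (h : (m : ℤ) * b - n * a = m * b' - n * t) (h1 : a - t < m) (h2 : t - a < m) : a = t := by
  have hd : (m : ℤ) ∣ n * (a - t) := ⟨b - b', by linarith⟩
  have hc : IsCoprime (m : ℤ) n := Nat.isCoprime_iff_coprime.mpr hcop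
  have := hc.dvd_of_dvd_mul_left hd
  have h0 := Int.eq_zero_of_abs_lt_dvd this (abs_lt.mpr ⟨by linarith, h1⟩)
  linarith

theorem ymono {m : ℕ} {y : ℕ → ℕ} (hmono : ∀ c < m, y c ≤ y (c + 1)) {c d : ℕ}
    (hcd : c ≤ d) (hd : d ≤ m) : y c ≤ y d := by
  induction d, hcd using Nat.le_induction with
  | base => exact le_rfl
  | succ k hk ih => exact (ih (by omega)).trans (hmono k (by omega))

theorem exists_col {y : ℕ → ℕ} (hy0 : y 0 = 0) {b : ℕ} (x : ℕ) (hb : b < y x) :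
    ∃ c < x, y c ≤ b ∧ b < y (c + 1) := by
  induction x with
  | zero => omega
  | succ k ih =>
    by_cases h : b < y k
    · obtain ⟨c, h1, h2⟩ := ih h
      exact ⟨c, by omega, h2⟩
    · exact ⟨k, by omega, by omega, hb⟩

/-- level of a lattice point -/
def lev (m n : ℕ) (a b : ℤ) : ℤ := (m : ℤ) * b - n * a

/-- north crossing -/
def crN (m n : ℕ) (p s : ℕ × ℕ) : Prop :=
  lev m n s.1 s.2 < lev m n p.1 p.2 ∧ lev m n p.1 p.2 < lev m n s.1 s.2 + m

/-- east crossing -/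
def crE (m n : ℕ) (y : ℕ → ℕ) (p : ℕ × ℕ) (e : ℕ) : Prop :=
  lev m n e (y e) < lev m n p.1 p.2 ∧ lev m n p.1 p.2 < lev m n e (y e) + n

theorem mem_north {m n : ℕ} {y : ℕ → ℕ} {s : ℕ × ℕ} : s ∈ northSteps m n y ↔
    (s.1 < m ∧ s.2 < n) ∧ y s.1 ≤ s.2 ∧ s.2 < y (s.1 + 1) := by
  simp [northSteps]

theorem mem_i {m n : ℕ} {y : ℕ → ℕ} {p : ℕ × ℕ} : p ∈ iSet m n y ↔
    ((1 ≤ p.1 ∧ p.1 ≤ m - 1) ∧ p.2 < n) ∧ n * p.1 < m * p.2 ∧ p.2 < y p.1 := by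
  simp [iSet]

theorem mem_o {m n : ℕ} {y : ℕ → ℕ} {q : ℕ × ℕ × ℕ} : q ∈ oSet m n y ↔
    ((1 ≤ q.1 ∧ q.1 ≤ m) ∧ q.2 ∈ northSteps m n y) ∧ q.1 ≤ q.2.1 := by
  simp [oSet, eastSteps]

open Classical in
theorem left_col {m n : ℕ} (hm : 0 < m) (hcop : Nat.Coprime m n) {y : ℕ → ℕ}
    (hmono : ∀ c < m, y c ≤ y (c + 1)) (hym : y m = n) {p : ℕ × ℕ} (hp : p ∈ iSet m n y) :
    ((northSteps m n y).filter fun s => crN m n p s ∧ s.1 < p.1).card =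
      ((Finset.range p.1).filter fun c : ℕ => lev m n c (y c) < lev m n p.1 p.2 ∧
        lev m n p.1 p.2 < lev m n c (y (c+1))).card := by
  obtain ⟨a, b⟩ := p
  rw [mem_i] at hp
  simp only at hp ⊢
  obtain ⟨⟨⟨ha1, ham⟩, hbn⟩, hpos, hby⟩ := hp
  apply Finset.card_bij (fun s _ => s.1)
  · rintro ⟨c, j⟩ h
    simp only [Finset.mem_filter, mem_north, Finset.mem_range] at h ⊢
    simp only [crN, lev] at h ⊢
    obtain ⟨⟨⟨h1, h2⟩, h3, h4⟩, ⟨h5, h6⟩, h7⟩ := h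
    refine ⟨h7, ?_, ?_⟩
    · have : (m : ℤ) * y c ≤ m * j := by exact_mod_cast Nat.mul_le_mul_left m h3
      linarith
    · have : (m : ℤ) * (j + 1) ≤ m * y (c+1) := by exact_mod_cast Nat.mul_le_mul_left m h4
      linarith
  · rintro ⟨c, j⟩ h ⟨c', j'⟩ h' hc
    simp only [Finset.mem_filter] at h h' hc
    simp only [crN, lev] at h h'
    subst hc
    obtain ⟨-, ⟨h5, h6⟩, -⟩ := h
    obtain ⟨-, ⟨h5', h6'⟩, -⟩ := h'
    have e1 : (m : ℤ) * j < m * (j' + 1) := by linarith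
    have e2 : (m : ℤ) * j' < m * (j + 1) := by linarith
    have hm' : (0 : ℤ) < m := by exact_mod_cast hm
    have := lt_of_mul_lt_mul_left e1 hm'.le
    have := lt_of_mul_lt_mul_left e2 hm'.le
    simp; omega
  · intro c h
    simp only [Finset.mem_filter, Finset.mem_range] at h
    simp only [lev] at h
    obtain ⟨h1, h2, h3⟩ := h
    have hm' : (0 : ℤ) < m := by exact_mod_cast hm
    set T : ℤ := m * b - n * a + n * c with hT
    have d1 := Int.mul_ediv_add_emod T m
    have d2 := Int.emod_nonneg T hm'.ne'
    have d3 := Int.emod_lt_of_pos T hm'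
    have d4 : T % m ≠ 0 := by
      intro h0
      have : (m : ℤ) * b - n * a = m * (T / m) - n * c := by linarith
      have := cop_x hcop this (by omega) (by omega)
      omega
    have d5 : 0 < T % m := lt_of_le_of_ne d2 (Ne.symm d4)
    have e1 : (y c : ℤ) < T / m + 1 := by
      apply lt_of_mul_lt_mul_left _ hm'.le
      linarith
    have e2 : T / m < y (c+1) := by
      apply lt_of_mul_lt_mul_left _ hm'.le
      linarith
    obtain ⟨j, hj⟩ := Int.eq_ofNat_of_zero_le (a := T / m) (by omega)
    have hyn : y (c+1) ≤ n := hym ▸ ymono hmono (by omega) le_rfl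
    rw [hj] at e1 e2 d1
    refine ⟨(c, j), ?_, rfl⟩
    simp only [Finset.mem_filter, mem_north]
    simp only [crN, lev]
    refine ⟨⟨⟨by omega, by omega⟩, by omega, by omega⟩, ⟨by linarith, by linarith⟩, h1⟩

open Classical in
theorem telescope {m n : ℕ} (hn : 0 < n) (hcop : Nat.Coprime m n) {y : ℕ → ℕ}
    (hy0 : y 0 = 0)
    (hmono : ∀ c < m, y c ≤ y (c + 1)) {p : ℕ × ℕ} (hp : p ∈ iSet m n y)
    (t : ℕ) (ht : t ≤ p.1) :
    (((Finset.range t).filter fun c : ℕ => lev m n c (y c) < lev m n p.1 p.2 ∧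
        lev m n p.1 p.2 < lev m n c (y (c+1))).card : ℤ) =
    ((Finset.Icc 1 t).filter fun e => crE m n y p e).card +
      if lev m n p.1 p.2 < lev m n t (y t) then 1 else 0 := by
  obtain ⟨a, b⟩ := p
  rw [mem_i] at hp
  simp only at hp ht ⊢
  obtain ⟨⟨⟨ha1, ham⟩, hbn⟩, hpos, hby⟩ := hp
  induction t with
  | zero =>
    have : ¬ lev m n a b < lev m n 0 0 := by
      simp only [lev]
      have : (n : ℤ) * a < m * b := by exact_mod_cast hpos
      linarith
    simp [hy0, this]
  | succ t ih =>
    rw [Finset.range_add_one, Finset.filter_insert, ← Finset.insert_Icc_right_eq_Icc_add_one (by omega),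
      Finset.filter_insert]
    have ih := ih (by omega)
    have n1 : lev m n a b ≠ lev m n t (y t) := fun h => by
      have := cop_x hcop h (by omega) (by omega)
      omega
    have n2 : lev m n a b ≠ lev m n t (y (t+1)) := fun h => by
      have := cop_x hcop h (by omega) (by omega)
      omega
    have n3 : lev m n a b ≠ lev m n (t+1 : ℕ) (y (t+1)) := fun h => by
      have h' := cop_x hcop h (by omega) (by omega)
      have h'' : a = t + 1 := by omega
      subst h''
      simp only [lev] at h
      have : (m : ℤ) * b < m * y (t+1) := by
        exact_mod_cast Nat.mul_lt_mul_of_pos_left hby (by omega)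
      linarith
    have hle : lev m n t (y t) ≤ lev m n t (y (t+1)) := by
      have : (m : ℤ) * y t ≤ m * y (t+1) := by
        exact_mod_cast Nat.mul_le_mul_left m (hmono t (by omega))
      simp only [lev]; linarith
    have heq : lev m n t (y (t+1)) = lev m n (t+1 : ℕ) (y (t+1)) + n := by
      simp only [lev]; push_cast; ring
    have hE : crE m n y (a, b) (t+1) ↔
        lev m n (t+1 : ℕ) (y (t+1)) < lev m n a b ∧ lev m n a b < lev m n t (y (t+1)) := by
      rw [heq]; rfl
    rw [apply_ite Finset.card, apply_ite Finset.card,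
      Finset.card_insert_of_notMem (by simp), Finset.card_insert_of_notMem (by simp)]
    simp only [hE]
    generalize Finset.card _ = X at ih ⊢
    generalize Finset.card _ = Y at ih ⊢
    generalize lev m n t (y t) = A at *
    generalize lev m n t (y (t+1)) = B at *
    generalize lev m n (t+1 : ℕ) (y (t+1)) = C at *
    generalize lev m n a b = L at *
    clear hE
    split_ifs at ih ⊢ <;> push_cast <;> omega

open Classical in
theorem left_count {m n : ℕ} (hm : 0 < m) (hn : 0 < n) (hcop : Nat.Coprime m n) {y : ℕ → ℕ}
    (hy0 : y 0 = 0)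
    (hmono : ∀ c < m, y c ≤ y (c + 1)) (hym : y m = n) {p : ℕ × ℕ} (hp : p ∈ iSet m n y) :
    (((northSteps m n y).filter fun s => crN m n p s ∧ s.1 < p.1).card : ℤ) =
      ((Finset.Icc 1 m).filter fun e => crE m n y p e ∧ e ≤ p.1).card + 1 := by
  rw [left_col hm hcop hmono hym hp, telescope hn hcop hy0 hmono hp p.1 le_rfl, if_pos]
  · congr 3
    rw [mem_i] at hp
    ext e
    simp only [Finset.mem_filter, Finset.mem_Icc]
    constructor
    · rintro ⟨h1, h2⟩; exact ⟨⟨h1.1, by omega⟩, h2, h1.2⟩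
    · rintro ⟨h1, h2, h3⟩; exact ⟨⟨h1.1, h3⟩, h2⟩
  · rw [mem_i] at hp
    have : (m : ℤ) * p.2 < m * y p.1 := by
      exact_mod_cast Nat.mul_lt_mul_of_pos_left hp.2.2 hm
    simp only [lev]; linarith

theorem north_lev {m n : ℕ} {y : ℕ → ℕ} (hy0 : y 0 = 0)
    (habove : ∀ c, 1 ≤ c → c ≤ m → n * c ≤ m * y c) {s : ℕ × ℕ} (hs : s ∈ northSteps m n y) :
    0 ≤ lev m n s.1 s.2 := by
  rw [mem_north] at hs
  have h : n * s.1 ≤ m * y s.1 := by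
    rcases Nat.eq_zero_or_pos s.1 with h | h
    · simp [h]
    · exact habove _ h (by omega)
  have h2 : m * y s.1 ≤ m * s.2 := Nat.mul_le_mul_left m hs.2.1
  have : (n : ℤ) * s.1 ≤ m * s.2 := by exact_mod_cast h.trans h2
  simp only [lev]; linarith

open Classical in
theorem right_bij {m n : ℕ} (hm : 0 < m) (hcop : Nat.Coprime m n) {y : ℕ → ℕ}
    (hy0 : y 0 = 0)
    (hmono : ∀ c < m, y c ≤ y (c + 1)) (hym : y m = n)
    (habove : ∀ c, 1 ≤ c → c ≤ m → n * c ≤ m * y c) :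
    ((iSet m n y ×ˢ northSteps m n y).filter fun q => crN m n q.1 q.2 ∧ ¬ q.2.1 < q.1.1).card =
    ((oSet m n y).filter fun q => lev m n q.2.1 q.2.2 + m ≤ lev m n q.1 (y q.1)).card := by
  have hm' : (0 : ℤ) < m := by exact_mod_cast hm
  apply Finset.card_bij (fun q _ => (q.1.1, q.2))
  · rintro ⟨⟨a, b⟩, ⟨c, j⟩⟩ h
    simp only [Finset.mem_filter, Finset.mem_product, mem_i, mem_o] at h ⊢
    simp only [crN, lev] at h ⊢
    obtain ⟨⟨⟨⟨⟨h1, h2⟩, h3⟩, h4, h5⟩, hs⟩, ⟨h6, h7⟩, h8⟩ := h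
    refine ⟨⟨⟨⟨h1, by omega⟩, hs⟩, by omega⟩, ?_⟩
    have : (m : ℤ) * (b + 1) ≤ m * y a := by exact_mod_cast Nat.mul_le_mul_left m h5
    linarith
  · rintro ⟨⟨a, b⟩, ⟨c, j⟩⟩ h ⟨⟨a', b'⟩, ⟨c', j'⟩⟩ h' he
    simp only [Finset.mem_filter, Prod.mk.injEq] at h h' he ⊢
    simp only [crN, lev] at h h' ⊢
    obtain ⟨rfl, rfl, rfl⟩ := he
    obtain ⟨-, ⟨h5, h6⟩, -⟩ := h
    obtain ⟨-, ⟨h5', h6'⟩, -⟩ := h'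
    have := lt_of_mul_lt_mul_left (show (m : ℤ) * b < m * (b' + 1) by linarith) hm'.le
    have := lt_of_mul_lt_mul_left (show (m : ℤ) * b' < m * (b + 1) by linarith) hm'.le
    simp; omega
  · rintro ⟨a, ⟨c, j⟩⟩ h
    simp only [Finset.mem_filter, mem_o] at h
    obtain ⟨⟨⟨⟨h1, h2⟩, hs⟩, h3⟩, h4⟩ := h
    have hl := north_lev hy0 habove hs
    have hs' := mem_north.mp hs
    simp only [lev] at h4 hl hs' h3
    have hac : a ≠ c := by
      rintro rfl
      have : (m : ℤ) * y a ≤ m * j := by exact_mod_cast Nat.mul_le_mul_left m hs'.2.1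
      linarith
    set T : ℤ := m * j - n * c + n * a with hT
    have d1 := Int.mul_ediv_add_emod T m
    have d2 := Int.emod_nonneg T hm'.ne'
    have d3 := Int.emod_lt_of_pos T hm'
    have d4 : T % m ≠ 0 := by
      intro h0
      have : (m : ℤ) * j - n * c = m * (T / m) - n * a := by linarith
      have := cop_x hcop this (by omega) (by omega)
      omega
    have d5 : 0 < T % m := lt_of_le_of_ne d2 (Ne.symm d4)
    have hna : 0 ≤ (n : ℤ) * a := by positivity
    have e1 : 0 ≤ T / m := Int.ediv_nonneg (by linarith) hm'.le
    have e2 : T / m + 1 < y a := by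
      apply lt_of_mul_lt_mul_left _ hm'.le
      linarith
    obtain ⟨i, hi⟩ := Int.eq_ofNat_of_zero_le e1
    rw [hi] at e2 d1
    have hyn : y a ≤ n := hym ▸ ymono hmono h2 le_rfl
    refine ⟨((a, i + 1), (c, j)), ?_, rfl⟩
    simp only [Finset.mem_filter, Finset.mem_product, mem_i]
    simp only [crN, lev]
    refine ⟨⟨⟨⟨⟨h1, by omega⟩, by omega⟩, ?_, by omega⟩, hs⟩, ⟨?_, ?_⟩, by omega⟩
    · zify; linarith
    · push_cast; linarith
    · push_cast; linarith

open Classical in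
theorem left_bij {m n : ℕ} (hm : 0 < m) (hn : 0 < n) (hcop : Nat.Coprime m n) {y : ℕ → ℕ}
    (hy0 : y 0 = 0)
    (hmono : ∀ c < m, y c ≤ y (c + 1))
    (habove : ∀ c, 1 ≤ c → c ≤ m → n * c ≤ m * y c) :
    ((oSet m n y).filter fun q => lev m n q.1 (y q.1) + n ≤ lev m n q.2.1 q.2.2).card =
    ((iSet m n y ×ˢ Finset.Icc 1 m).filter fun q => crE m n y q.1 q.2 ∧ q.2 ≤ q.1.1).card := by
  have hm' : (0 : ℤ) < m := by exact_mod_cast hm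
  have hn' : (0 : ℤ) < n := by exact_mod_cast hn
  apply Finset.card_bij (fun q _ => ((q.1 + m * (q.2.2 - y q.1) / n, q.2.2), q.1))
  · rintro ⟨a, ⟨c, j⟩⟩ h
    simp only [Finset.mem_filter, mem_o, mem_north] at h
    obtain ⟨⟨⟨⟨h1, h2⟩, ⟨h5, h6⟩, h7, h8⟩, h3⟩, h4⟩ := h
    simp only [Finset.mem_filter, Finset.mem_product, Finset.mem_Icc, mem_i] at h4 ⊢
    simp only [crE, lev] at h4 ⊢
    have hyj : y a ≤ j := (ymono hmono h3 h5.le).trans h7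
    obtain ⟨d, rfl⟩ := Nat.exists_eq_add_of_le hyj
    rw [Nat.add_sub_cancel_left]
    have hd : d ≠ 0 := by
      rintro rfl
      have : (a : ℤ) ≤ c := by exact_mod_cast h3
      have : (n : ℤ) * a ≤ n * c := by gcongr
      push_cast at h4
      linarith
    have d1 := Nat.div_add_mod (m * d) n
    have d3 := Nat.mod_lt (m * d) hn
    have d4 : m * d % n ≠ 0 := by
      intro h0
      have := (Nat.Coprime.symm hcop).dvd_of_dvd_mul_left (Nat.dvd_of_mod_eq_zero h0)
      have := Nat.le_of_dvd (by omega) this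
      omega
    have d5 : 0 < m * d % n := Nat.pos_of_ne_zero d4
    set x := m * d / n
    set r := m * d % n
    have hab := habove a h1 h2
    zify at d1 d3 d5 hab
    push_cast at h4
    have hcx : c < a + x := by
      have : (c : ℤ) < a + x := by
        apply lt_of_mul_lt_mul_left _ hn'.le
        linarith
      omega
    have hxm : a + x < m := by
      have : (a : ℤ) + x < m := by
        apply lt_of_mul_lt_mul_left _ hn'.le
        have : (m : ℤ) * (y a + d) ≤ m * n := by
          have : (y a : ℤ) + d ≤ n := by omega
          gcongr
        linarith
      omega
    have := ymono hmono (c := c+1) (d := a + x) (by omega) (by omega)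
    refine ⟨⟨⟨⟨⟨by omega, by omega⟩, h6⟩, ?_, by omega⟩, h1, h2⟩, ⟨?_, ?_⟩, by omega⟩
    · zify; linarith
    · push_cast; linarith
    · push_cast; linarith
  · rintro ⟨a, ⟨c, j⟩⟩ h ⟨a', ⟨c', j'⟩⟩ h' he
    simp only [Finset.mem_filter, mem_o, mem_north, Prod.mk.injEq] at h h' he ⊢
    obtain ⟨⟨-, rfl⟩, rfl⟩ := he
    refine ⟨rfl, ?_, rfl⟩
    obtain ⟨⟨⟨-, ⟨h5, -⟩, h7, h8⟩, -⟩, -⟩ := h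
    obtain ⟨⟨⟨-, ⟨h5', -⟩, h7', h8'⟩, -⟩, -⟩ := h'
    rcases lt_trichotomy c c' with hc | hc | hc
    · have := ymono hmono (c := c+1) (d := c') (by omega) (by omega)
      omega
    · exact hc
    · have := ymono hmono (c := c'+1) (d := c) (by omega) (by omega)
      omega
  · rintro ⟨⟨x, b⟩, a⟩ h
    simp only [Finset.mem_filter, Finset.mem_product, Finset.mem_Icc, mem_i] at h
    simp only [crE, lev] at h
    obtain ⟨⟨⟨⟨⟨h1, h2⟩, h3⟩, h4, h5⟩, h6, h7⟩, ⟨h8, h9⟩, h10⟩ := h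
    obtain ⟨c, hc, hc1, hc2⟩ := exists_col hy0 x h5
    obtain ⟨k, rfl⟩ := Nat.exists_eq_add_of_le h10
    have hnk : 0 ≤ (n : ℤ) * k := by positivity
    push_cast at h8 h9
    have hb : y a < b := by
      have : (y a : ℤ) < b := by
        apply lt_of_mul_lt_mul_left _ hm'.le
        linarith
      omega
    have hac : a ≤ c := by
      by_contra hcon
      have := ymono hmono (c := c+1) (d := a) (by omega) (by omega)
      omega
    refine ⟨(a, (c, b)), ?_, ?_⟩
    · simp only [Finset.mem_filter, mem_o, mem_north]
      simp only [lev]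
      refine ⟨⟨⟨⟨h6, h7⟩, ⟨by omega, h3⟩, hc1, hc2⟩, hac⟩, ?_⟩
      have : (c : ℤ) + 1 ≤ a + k := by omega
      have : (n : ℤ) * (c + 1) ≤ n * (a + k) := by gcongr
      linarith
    · simp only [Prod.mk.injEq, and_true]
      congr 1
      obtain ⟨d, rfl⟩ := Nat.exists_eq_add_of_le hb.le
      rw [Nat.add_sub_cancel_left]
      push_cast at h8 h9
      apply Nat.div_eq_of_lt_le
      · zify; linarith
      · zify; linarith

end OSetAux

/-- For every `(m,n)`-Dyck path `π`,
`|o(π)| − h₊(π) = Σ_{p ∈ i(π)} (k(p) − 1)`. -/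
theorem oSet_card_sub_hplus (m n : ℕ) (hm : 0 < m) (hn : 0 < n)
    (hcop : Nat.Coprime m n) (y : ℕ → ℕ) (hy0 : y 0 = 0)
    (hmono : ∀ c < m, y c ≤ y (c + 1)) (hym : y m = n)
    (habove : ∀ c, 1 ≤ c → c ≤ m → n * c ≤ m * y c) :
    ((oSet m n y).card : ℤ) - (hplus m n y : ℤ)
      = ∑ p ∈ iSet m n y, ((kNum m n y p : ℤ) - 1) := by
  classical
  have hk : ∀ p ∈ iSet m n y, (kNum m n y p : ℤ) - 1 =
      ((Finset.Icc 1 m).filter fun e => OSetAux.crE m n y p e ∧ e ≤ p.1).card +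
      ((northSteps m n y).filter fun s => OSetAux.crN m n p s ∧ ¬ s.1 < p.1).card := by
    intro p hp
    have h1 : kNum m n y p = ((northSteps m n y).filter fun s => OSetAux.crN m n p s).card := by
      unfold kNum
      congr 1
      apply Finset.filter_congr
      intro s _
      simp only [OSetAux.crN, OSetAux.lev]
      constructor
      · rintro ⟨h1, h2⟩; constructor <;> linarith
      · rintro ⟨h1, h2⟩; constructor <;> linarith
    rw [h1, ← Finset.card_filter_add_card_filter_not (fun s : ℕ × ℕ => s.1 < p.1),
      Finset.filter_filter, Finset.filter_filter]
    push_cast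
    rw [OSetAux.left_count hm hn hcop hy0 hmono hym hp]
    ring
  rw [Finset.sum_congr rfl hk, Finset.sum_add_distrib]
  have hR := OSetAux.right_bij hm hcop hy0 hmono hym habove
  have hL := OSetAux.left_bij hm hn hcop hy0 hmono habove
  have sR : ∑ p ∈ iSet m n y,
      ((northSteps m n y).filter fun s => OSetAux.crN m n p s ∧ ¬ s.1 < p.1).card =
      ((iSet m n y ×ˢ northSteps m n y).filter
        fun q => OSetAux.crN m n q.1 q.2 ∧ ¬ q.2.1 < q.1.1).card := by
    simp only [Finset.card_filter, Finset.sum_product]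
  have sL : ∑ p ∈ iSet m n y,
      ((Finset.Icc 1 m).filter fun e => OSetAux.crE m n y p e ∧ e ≤ p.1).card =
      ((iSet m n y ×ˢ Finset.Icc 1 m).filter
        fun q => OSetAux.crE m n y q.1 q.2 ∧ q.2 ≤ q.1.1).card := by
    simp only [Finset.card_filter, Finset.sum_product]
  rw [← Nat.cast_sum, ← Nat.cast_sum, sR, sL, hR, ← hL]
  unfold hplus
  simp only [Finset.card_filter]
  rw [Finset.card_eq_sum_ones]
  push_cast
  rw [← Finset.sum_sub_distrib, ← Finset.sum_add_distrib]
  apply Finset.sum_congr rfl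
  rintro ⟨a, c, j⟩ _
  simp only [OSetAux.lev, mul_add, mul_sub, mul_one]
  have hm' : (0 : ℤ) < m := by exact_mod_cast hm
  have hn' : (0 : ℤ) < n := by exact_mod_cast hn
  split_ifs <;> omega
end

section
/- For every (m,n)-Dyck path π, h₊(π) + Σ_{p ∈ i(π)} k(p) = (m−1)(n−1)/2. -/
open Finset in
theorem aux_tele (M M' : ℕ → ℕ → ℤ) (k : ℕ) :
    ∑ x ∈ range (k+1), ∑ i ∈ range k,
      (if i + 1 ≤ x then M (i+1) (x+1) - M' (i+1) x else M' (x+1) (i+1) - M x (i+1))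
    = ∑ i ∈ range k, (M (i+1) (k+1) - M 0 (i+1)) := by
  induction k with
  | zero => simp
  | succ k ih =>
    rw [sum_range_succ _ (k+1), sum_congr rfl (fun x _ => sum_range_succ _ k),
      sum_add_distrib, ih]
    have h1 : ∑ x ∈ range (k+1), (if k + 1 ≤ x then M (k+1) (x+1) - M' (k+1) x
        else M' (x+1) (k+1) - M x (k+1)) = ∑ x ∈ range (k+1), (M' (x+1) (k+1) - M x (k+1)) := by
      apply sum_congr rfl
      intro x hx
      rw [mem_range] at hx
      rw [if_neg (by omega)]
    have h2 : ∑ i ∈ range (k+1), (if i + 1 ≤ k+1 then M (i+1) (k+1+1) - M' (i+1) (k+1)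
        else M' (k+1+1) (i+1) - M (k+1) (i+1))
        = ∑ i ∈ range (k+1), (M (i+1) (k+1+1) - M' (i+1) (k+1)) := by
      apply sum_congr rfl
      intro x hx
      rw [mem_range] at hx
      rw [if_pos (by omega)]
    rw [h1, h2]
    simp only [sum_sub_distrib]
    rw [sum_range_succ (fun x => M 0 (x+1)), sum_range_succ' (fun x => M x (k+1))]
    ring

open Finset in
theorem aux_count (p q : ℕ) (t : ℤ) (hpq : p ≤ q) :
    ∑ j ∈ Ico p q, (if (j : ℤ) < t then (1 : ℤ) else 0) = min (q : ℤ) t - min (p : ℤ) t := by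
  induction q, hpq using Nat.le_induction with
  | base => simp
  | succ q hq ih =>
    rw [sum_Ico_succ_top hq, ih]
    push_cast
    split_ifs <;> omega

open Finset in
theorem aux_north (m n : ℕ) (y : ℕ → ℕ) (hb : ∀ c ≤ m, y c ≤ n) (F : ℕ × ℕ → ℤ) :
    ∑ s ∈ northSteps m n y, F s = ∑ x ∈ range m, ∑ j ∈ Ico (y x) (y (x+1)), F (x, j) := by
  unfold northSteps
  rw [sum_filter, sum_product]
  apply sum_congr rfl
  intro x hx
  rw [← sum_filter]
  apply sum_congr _ (fun _ _ => rfl)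
  ext j
  have := hb (x+1) (by have := mem_range.1 hx; omega)
  simp only [mem_filter, mem_range, mem_Ico]
  omega

open Finset in
theorem aux_uniq (n : ℕ) (P : ℕ → Prop) [DecidablePred P] (Q : Prop) [Decidable Q] (b0 : ℤ)
    (h : ∀ b < n, P b ↔ ((b : ℤ) = b0 ∧ Q)) (hQ : Q → 0 ≤ b0 ∧ b0 < n) :
    ∑ b ∈ range n, (if P b then (1 : ℤ) else 0) = if Q then 1 else 0 := by
  by_cases q : Q
  · obtain ⟨h0, h1⟩ := hQ q
    lift b0 to ℕ using h0
    rw [if_pos q, sum_eq_single_of_mem b0 (by simpa using h1)]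
    · rw [if_pos]
      rw [h b0 (by exact_mod_cast h1)]
      exact ⟨rfl, q⟩
    · intro b hb hne
      rw [if_neg]
      rw [h b (by simpa using hb)]
      rintro ⟨h, -⟩
      exact hne (by exact_mod_cast h)
  · rw [if_neg q]
    apply sum_eq_zero
    intro b hb
    rw [if_neg]
    rw [h b (by simpa using hb)]
    tauto

/-- ceiling of `n*d/m` -/
def gCeil (m n d : ℕ) : ℤ := ((n : ℤ) * d + (m - 1)) / m

theorem gCeil_lo (m n d : ℕ) (hm : 0 < m) : (n : ℤ) * d ≤ m * gCeil m n d := by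
  unfold gCeil
  have h1 := Int.emod_add_mul_ediv ((n : ℤ) * d + (m - 1)) m
  have h2 := Int.emod_lt_of_pos ((n : ℤ) * d + (m - 1)) (by exact_mod_cast hm : (0:ℤ) < m)
  linarith

theorem gCeil_hi (m n d : ℕ) (hm : 0 < m) : m * gCeil m n d < (n : ℤ) * d + m := by
  unfold gCeil
  have h1 := Int.emod_add_mul_ediv ((n : ℤ) * d + (m - 1)) m
  have h2 := Int.emod_nonneg ((n : ℤ) * d + (m - 1)) (by omega : (m:ℤ) ≠ 0)
  linarith

theorem gCeil_lt (m n d : ℕ) (hm : 0 < m) (hcop : Nat.Coprime m n) (h0 : 0 < d) (h1 : d < m) :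
    (n : ℤ) * d < m * gCeil m n d := by
  apply lt_of_le_of_ne (gCeil_lo m n d hm)
  intro h
  have h2 : (m : ℤ) ∣ ((n * d : ℕ) : ℤ) := ⟨_, by push_cast; exact h⟩
  have h3 : m ∣ n * d := by exact_mod_cast h2
  exact Nat.not_dvd_of_pos_of_lt h0 h1 (hcop.dvd_of_dvd_mul_left h3)

theorem aux_lt {m : ℤ} (hm : 0 < m) {a b : ℤ} (h : m * a < m * b) : a < b :=
  lt_of_mul_lt_mul_left h hm.le

/-- If `m*a < m*b + m` then `a ≤ b`. -/
theorem aux_le {m : ℤ} (hm : 0 < m) {a b : ℤ} (h : m * a < m * b + m) : a ≤ b := by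
  have : a < b + 1 := aux_lt hm (by linarith)
  omega

open Finset in
theorem aux_point (m n : ℕ) (hm : 0 < m) (hn : 0 < n)
    (hcop : Nat.Coprime m n) (y : ℕ → ℕ) (hb : ∀ c ≤ m, y c ≤ n)
    (hab : ∀ c ≤ m, (n : ℤ) * c ≤ m * y c) (x j a : ℕ) (hx : x < m) (ha : 1 ≤ a) (ham : a < m)
    (hj : y x ≤ j) :
    (if a ≤ x ∧ ((m : ℤ) * (y a : ℤ) - (n : ℤ) * (a : ℤ)
        < (m : ℤ) * ((j : ℤ) + 1) - (n : ℤ) * (x : ℤ) ∧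
      (m : ℤ) * (j : ℤ) - (n : ℤ) * (x : ℤ)
        < (m : ℤ) * (y a : ℤ) - (n : ℤ) * ((a : ℤ) - 1)) then (1 : ℤ) else 0)
    + ∑ b ∈ range n, (if (n * a < m * b ∧ b < y a) ∧ ((m : ℤ) * j < (m : ℤ) * b + (n : ℤ) * ((x : ℤ) - (a : ℤ)) ∧
        (m : ℤ) * b + (n : ℤ) * ((x : ℤ) - (a : ℤ)) < (m : ℤ) * ((j : ℤ) + 1)) then (1 : ℤ) else 0)
    = if a ≤ x then (if (j : ℤ) < y a + gCeil m n (x - a + 1) then 1 else 0)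
      else (if (j : ℤ) < y a - gCeil m n (a - x) then 1 else 0) := by
  have hM : (0 : ℤ) < m := by exact_mod_cast hm
  have hN : (0 : ℤ) < n := by exact_mod_cast hn
  have hjx : (n : ℤ) * x ≤ m * j := by
    have h1 := hab x hx.le
    have h2 : (y x : ℤ) ≤ j := by exact_mod_cast hj
    nlinarith
  have hyn : (y a : ℤ) ≤ n := by exact_mod_cast hb a ham.le
  rcases lt_trichotomy a x with hlt | rfl | hgt
  · obtain ⟨d, rfl⟩ : ∃ d, x = a + d := ⟨x - a, by omega⟩
    have e1 : a + d - a + 1 = d + 1 := by omega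
    rw [e1]
    have g1 := gCeil_lt m n d hm hcop (by omega) (by omega)
    have g2 := gCeil_hi m n d hm
    have g3 := gCeil_lo m n (d+1) hm
    have g4 := gCeil_hi m n (d+1) hm
    generalize gCeil m n d = g at *
    generalize gCeil m n (d+1) = G at *
    push_cast at *
    have hna : 0 < (n : ℤ) * a := by positivity
    have hgG : g - 1 < G := aux_lt hM (by linarith)
    rw [aux_uniq n _ ((j : ℤ) - g + 1 < y a) (j - g + 1)]
    · have c1 : (m : ℤ) * (y a : ℤ) - (n : ℤ) * (a : ℤ)
        < (m : ℤ) * ((j : ℤ) + 1) - (n : ℤ) * ((a : ℤ) + d) ↔ ¬ ((j : ℤ) - g + 1 < y a) := by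
        rw [not_lt]
        constructor
        · intro h
          exact aux_le hM (by linarith)
        · intro h
          have := mul_le_mul_of_nonneg_left h hM.le
          linarith
      have c2 : (m : ℤ) * (j : ℤ) - (n : ℤ) * ((a : ℤ) + d)
        < (m : ℤ) * (y a : ℤ) - (n : ℤ) * ((a : ℤ) - 1) ↔ (j : ℤ) < y a + G := by
        constructor
        · intro h
          exact aux_lt hM (by linarith)
        · intro h
          have := mul_le_mul_of_nonneg_left (Int.add_one_le_of_lt h) hM.le
          linarith
      simp only [c1, c2]
      split_ifs <;> omega
    · intro b hbn
      constructor
      · rintro ⟨⟨h1, h2⟩, h3, h4⟩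
        have e : (b : ℤ) = j - g + 1 := by
          apply le_antisymm
          · have : (b:ℤ) < j - g + 2 := aux_lt hM (by linarith)
            omega
          · have : (j:ℤ) - g < b := aux_lt hM (by linarith)
            omega
        refine ⟨e, ?_⟩
        rw [← e]; exact_mod_cast h2
      · rintro ⟨e, h⟩
        have e2 : (m : ℤ) * b = m * j - m * g + m := by rw [e]; ring
        refine ⟨⟨?_, ?_⟩, ?_, ?_⟩
        · zify
          linarith
        · zify; rw [e]; exact h
        · linarith
        · linarith
    · intro h
      refine ⟨?_, by omega⟩
      have : (-1 : ℤ) < j - g + 1 := aux_lt hM (by linarith)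
      omega
  · rw [if_pos le_rfl]
    have e1 : a - a + 1 = 1 := by omega
    rw [e1]
    have g3 := gCeil_lo m n 1 hm
    have g4 := gCeil_hi m n 1 hm
    generalize gCeil m n 1 = G at *
    push_cast at *
    rw [aux_uniq n _ False 0]
    · have hj' : (y a : ℤ) ≤ j := by exact_mod_cast hj
      have hj2 := mul_le_mul_of_nonneg_left hj' hM.le
      have c1 : (m : ℤ) * (y a : ℤ) - (n : ℤ) * (a : ℤ)
        < (m : ℤ) * ((j : ℤ) + 1) - (n : ℤ) * (a : ℤ) := by linarith
      have c2 : (m : ℤ) * (j : ℤ) - (n : ℤ) * (a : ℤ)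
        < (m : ℤ) * (y a : ℤ) - (n : ℤ) * ((a : ℤ) - 1) ↔ (j : ℤ) < y a + G := by
        constructor
        · intro h
          exact aux_lt hM (by linarith)
        · intro h
          have := mul_le_mul_of_nonneg_left (Int.add_one_le_of_lt h) hM.le
          linarith
      simp only [c1, c2, le_refl, true_and, if_false, add_zero]
    · intro b hbn
      simp only [and_false, iff_false]
      rintro ⟨-, h3, h4⟩
      have h5 : (j : ℤ) < b := aux_lt hM (by linarith)
      have h6 : (b : ℤ) < j + 1 := aux_lt hM (by linarith)
      omega
    · exact False.elim
  · obtain ⟨d, rfl⟩ : ∃ d, a = x + d := ⟨a - x, by omega⟩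
    have e1 : x + d - x = d := by omega
    rw [e1, if_neg (by omega), if_neg (by omega)]
    have g1 := gCeil_lt m n d hm hcop (by omega) (by omega)
    have g2 := gCeil_hi m n d hm
    generalize gCeil m n d = g at *
    push_cast at *
    rw [zero_add]
    have hnd : 0 ≤ (n : ℤ) * d := by positivity
    have hg : 0 < g := aux_lt hM (by linarith)
    apply aux_uniq n _ _ (j + g)
    · intro b hbn
      constructor
      · rintro ⟨⟨h1, h2⟩, h3, h4⟩
        have e : (b : ℤ) = j + g := by
          apply le_antisymm
          · have : (b:ℤ) < j + g + 1 := aux_lt hM (by linarith)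
            omega
          · have : (j:ℤ) + g - 1 < b := aux_lt hM (by linarith)
            omega
        refine ⟨e, ?_⟩
        have : (b : ℤ) < y (x + d) := by exact_mod_cast h2
        omega
      · rintro ⟨e, h⟩
        have e2 : (m : ℤ) * b = m * j + m * g := by rw [e]; ring
        refine ⟨⟨?_, ?_⟩, ?_, ?_⟩
        · zify
          linarith
        · zify; rw [e]; omega
        · linarith
        · linarith
    · intro h
      omega

open Finset in
theorem aux_total (m n : ℕ) (hm : 0 < m) (hn : 0 < n)
    (hcop : Nat.Coprime m n) (y : ℕ → ℕ) (hb : ∀ c ≤ m, y c ≤ n)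
    (hab : ∀ c ≤ m, (n : ℤ) * c ≤ m * y c) :
    ((hplus m n y + ∑ p ∈ iSet m n y, kNum m n y p : ℕ) : ℤ) =
    ∑ x ∈ range m, ∑ i ∈ range (m - 1), ∑ j ∈ Ico (y x) (y (x+1)),
      (if i + 1 ≤ x then (if (j : ℤ) < y (i+1) + gCeil m n (x - (i+1) + 1) then (1:ℤ) else 0)
      else (if (j : ℤ) < y (i+1) - gCeil m n (i + 1 - x) then 1 else 0)) := by
  have hI : Icc 1 (m-1) = (range (m-1)).image (· + 1) := by
    ext a; simp only [mem_Icc, mem_image, mem_range]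
    constructor
    · intro h; exact ⟨a - 1, by omega, by omega⟩
    · rintro ⟨b, h, rfl⟩; omega
  have hIs : ∀ F : ℕ → ℤ, ∑ a ∈ Icc 1 (m-1), F a = ∑ i ∈ range (m-1), F (i+1) := by
    intro F
    rw [hI, sum_image (by intro a _ b _ h; simpa using h)]
  push_cast
  have hk : ∑ p ∈ iSet m n y, (kNum m n y p : ℤ) = ∑ x ∈ range m, ∑ j ∈ Ico (y x) (y (x+1)),
      ∑ a ∈ Icc 1 (m-1), ∑ b ∈ range n, (if (n * a < m * b ∧ b < y a) ∧ ((m : ℤ) * j < (m : ℤ) * b + (n : ℤ) * ((x : ℤ) - (a : ℤ)) ∧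
        (m : ℤ) * b + (n : ℤ) * ((x : ℤ) - (a : ℤ)) < (m : ℤ) * ((j : ℤ) + 1)) then (1 : ℤ) else 0) := by
    rw [← aux_north m n y hb (fun s => ∑ a ∈ Icc 1 (m-1), ∑ b ∈ range n, (if (n * a < m * b ∧ b < y a) ∧ ((m : ℤ) * s.2 < (m : ℤ) * b + (n : ℤ) * ((s.1 : ℤ) - (a : ℤ)) ∧
        (m : ℤ) * b + (n : ℤ) * ((s.1 : ℤ) - (a : ℤ)) < (m : ℤ) * ((s.2 : ℤ) + 1)) then (1 : ℤ) else 0))]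
    unfold kNum
    simp_rw [card_filter]
    push_cast
    rw [sum_comm]
    apply sum_congr rfl
    intro s _
    unfold iSet
    rw [sum_filter, sum_product]
    simp_rw [ite_and]
  have hh : (hplus m n y : ℤ) = ∑ x ∈ range m, ∑ j ∈ Ico (y x) (y (x+1)),
      ∑ a ∈ Icc 1 (m-1), (if a ≤ x ∧ ((m : ℤ) * (y a : ℤ) - (n : ℤ) * (a : ℤ)
        < (m : ℤ) * ((j : ℤ) + 1) - (n : ℤ) * (x : ℤ) ∧
      (m : ℤ) * (j : ℤ) - (n : ℤ) * (x : ℤ)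
        < (m : ℤ) * (y a : ℤ) - (n : ℤ) * ((a : ℤ) - 1)) then (1 : ℤ) else 0) := by
    unfold hplus oSet eastSteps
    rw [filter_filter, card_filter, sum_product, sum_comm]
    push_cast
    rw [aux_north m n y hb]
    apply sum_congr rfl
    intro x hx
    apply sum_congr rfl
    intro j _
    rw [mem_range] at hx
    symm
    apply sum_subset
    · intro a; simp only [mem_Icc]; omega
    · intro a h1 h2
      simp only [mem_Icc] at h1 h2
      rw [if_neg]
      rintro ⟨h, -⟩
      omega
  rw [hk, hh, ← sum_add_distrib]
  apply sum_congr rfl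
  intro x hx
  rw [← sum_add_distrib, sum_comm]
  apply sum_congr rfl
  intro j hj
  rw [← sum_add_distrib, hIs]
  apply sum_congr rfl
  intro i hi
  rw [mem_range] at hx hi
  rw [mem_Ico] at hj
  exact aux_point m n hm hn hcop y hb hab x j (i+1) hx (by omega) (by omega) hj.1


/-- For every `(m,n)`-Dyck path `π`,
`h₊(π) + Σ_{p ∈ i(π)} k(p) = (m−1)(n−1)/2`. -/
theorem hplus_add_sum_kNum (m n : ℕ) (hm : 0 < m) (hn : 0 < n)
    (hcop : Nat.Coprime m n) (y : ℕ → ℕ) (hy0 : y 0 = 0)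
    (hmono : ∀ c < m, y c ≤ y (c + 1)) (hym : y m = n)
    (habove : ∀ c, 1 ≤ c → c ≤ m → n * c ≤ m * y c) :
    hplus m n y + ∑ p ∈ iSet m n y, kNum m n y p = (m - 1) * (n - 1) / 2 := by
  have hmono' : ∀ a b, a ≤ b → b ≤ m → y a ≤ y b := by
    intro a b hab
    induction b, hab using Nat.le_induction with
    | base => intro _; exact le_rfl
    | succ b hb ih => intro h; exact (ih (by omega)).trans (hmono b (by omega))
  have hb : ∀ c ≤ m, y c ≤ n := fun c hc => hym ▸ hmono' c m hc le_rfl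
  have hab : ∀ c ≤ m, (n : ℤ) * c ≤ m * y c := by
    intro c hc
    rcases Nat.eq_zero_or_pos c with rfl | h
    · simp [hy0]
    · exact_mod_cast habove c h hc
  have hM : (0 : ℤ) < m := by exact_mod_cast hm
  have hN : (0 : ℤ) < n := by exact_mod_cast hn
  have key := aux_total m n hm hn hcop y hb hab
  have hyg : ∀ c ≤ m, gCeil m n c ≤ y c := fun c hc =>
    aux_le hM (by have := hab c hc; have := gCeil_hi m n c hm; linarith)
  have hgm : ∀ a b : ℕ, a ≤ b → gCeil m n a ≤ gCeil m n b := by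
    intro a b h
    apply aux_le hM
    have h1 := gCeil_hi m n a hm
    have h2 := gCeil_lo m n b hm
    have h3 : (a : ℤ) ≤ b := by exact_mod_cast h
    nlinarith
  have hg0 : ∀ a : ℕ, 0 ≤ gCeil m n a := by
    intro a
    apply aux_le hM
    have h2 := gCeil_lo m n a hm
    have : 0 ≤ (n : ℤ) * a := by positivity
    linarith
  have tele := aux_tele (fun a b => min (y b : ℤ) (y a + gCeil m n (b - a)))
    (fun a b => min (y b : ℤ) (y a + gCeil m n (b - a + 1))) (m - 1)
  have hm1 : m - 1 + 1 = m := by omega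
  rw [hm1] at tele
  have key2 : ((hplus m n y + ∑ p ∈ iSet m n y, kNum m n y p : ℕ) : ℤ) =
      ∑ i ∈ Finset.range (m - 1), ((n : ℤ) - gCeil m n (i + 1)) := by
    rw [key]
    trans
    swap
    · trans
      · exact tele
      · apply Finset.sum_congr rfl
        intro i hi
        rw [Finset.mem_range] at hi
        have h1 := hyg (i+1) (by omega)
        have h2 : (n : ℤ) ≤ gCeil m n (i+1) + gCeil m n (m - (i+1)) := by
          apply aux_le hM
          have h3 := gCeil_lo m n (i+1) hm
          have h4 := gCeil_lo m n (m - (i+1)) hm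
          rw [Nat.cast_sub (by omega)] at h4
          nlinarith
        simp only [hym, hy0, Nat.sub_zero]
        push_cast at *
        omega
    · apply Finset.sum_congr rfl
      intro x hx
      apply Finset.sum_congr rfl
      intro i hi
      rw [Finset.mem_range] at hx hi
      have hxx := hmono x hx
      split_ifs with h
      · rw [aux_count _ _ _ hxx]
        have e : x + 1 - (i + 1) = x - (i+1) + 1 := by omega
        simp only [e]
      · have h1 := hyg (i+1) (by omega)
        have h2 := hgm (i+1-x) (i+1) (by omega)
        rw [aux_count _ _ _ hxx]
        have e : i + 1 - (x + 1) + 1 = i + 1 - x := by omega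
        simp only [e]
        omega
  have key3 : 2 * ∑ i ∈ Finset.range (m - 1), ((n : ℤ) - gCeil m n (i + 1))
      = (m - 1 : ℕ) * ((n : ℤ) - 1) := by
    rw [two_mul]
    nth_rewrite 2 [← Finset.sum_range_reflect]
    rw [← Finset.sum_add_distrib]
    rw [Finset.sum_congr rfl (g := fun _ => (n : ℤ) - 1)]
    · rw [Finset.sum_const, Finset.card_range, nsmul_eq_mul]
    · intro i hi
      rw [Finset.mem_range] at hi
      have e : m - 1 - 1 - i + 1 = m - (i + 1) := by omega
      rw [e]
      have h1 := gCeil_lt m n (i+1) hm hcop (by omega) (by omega)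
      have h2 := gCeil_hi m n (i+1) hm
      have h3 := gCeil_lt m n (m - (i+1)) hm hcop (by omega) (by omega)
      have h4 := gCeil_hi m n (m - (i+1)) hm
      rw [Nat.cast_sub (by omega)] at h3 h4
      have h5 : (n : ℤ) < gCeil m n (i+1) + gCeil m n (m - (i+1)) := aux_lt hM (by nlinarith)
      have h6 : gCeil m n (i+1) + gCeil m n (m - (i+1)) < n + 2 := aux_lt hM (by nlinarith)
      omega
  rw [← key2] at key3
  have hn1 : ((n : ℤ) - 1) = ((n - 1 : ℕ) : ℤ) := by omega
  rw [hn1] at key3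
  have key4 : 2 * (hplus m n y + ∑ p ∈ iSet m n y, kNum m n y p) = (m - 1) * (n - 1) := by
    exact_mod_cast key3
  omega
end

section
/- For every (m,n)-Dyck path π, Σ_{p ∈ v_*(π)} k(p) = Σ_{v ∈ v^*(π)} k(v), i.e. the sum of k over the inner vertices of π equals the sum of k over the outer vertices of π excluding the outer vertex most distant from the diagonal. -/
open Finset in
/-- Columns carrying at least one north step. -/
def colS (m : ℕ) (y : ℕ → ℕ) : Finset ℕ := (range m).filter fun c => y c < y (c + 1)

/-- Indicator that the level line through `(i,h)` meets column `j` properly. -/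
def colInd (m n : ℕ) (y : ℕ → ℕ) (i h j : ℕ) : ℕ :=
  if (m : ℤ) * y j < (m : ℤ) * h + (n : ℤ) * ((j : ℤ) - (i : ℤ)) ∧
    (m : ℤ) * h + (n : ℤ) * ((j : ℤ) - (i : ℤ)) < (m : ℤ) * y (j + 1) then 1 else 0

theorem y_mono_aux (m : ℕ) (y : ℕ → ℕ) (hmono : ∀ c < m, y c ≤ y (c + 1)) :
    ∀ c, c ≤ m → y c ≤ y m := by
  intro c hc
  induction hc using Nat.decreasingInduction with
  | self => exact le_rfl
  | of_succ k hk ih => exact (hmono k hk).trans ih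

theorem not_dvd_aux (m n : ℕ) (hcop : Nat.Coprime m n) (i j : ℕ) (hi : i < m) (hj : j < m)
    (h : (m : ℤ) ∣ (n : ℤ) * ((j : ℤ) - (i : ℤ))) : i = j := by
  have h1 : (m : ℤ) ∣ (j : ℤ) - (i : ℤ) :=
    (Nat.isCoprime_iff_coprime.mpr hcop).dvd_of_dvd_mul_left h
  have h2 : (j : ℤ) - (i : ℤ) = 0 := by
    apply Int.eq_zero_of_abs_lt_dvd h1
    rw [abs_lt]; omega
  omega

theorem ne_aux (m n : ℕ) (hcop : Nat.Coprime m n) (i j : ℕ) (hi : i < m) (hj : j < m)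
    (hij : i ≠ j) (a b : ℤ) :
    (m : ℤ) * a + (n : ℤ) * ((j : ℤ) - (i : ℤ)) ≠ (m : ℤ) * b := by
  intro h
  apply hij
  apply not_dvd_aux m n hcop i j hi hj
  exact ⟨b - a, by linarith⟩

theorem col_card (m n : ℕ) (hm : 0 < m) (hcop : Nat.Coprime m n) (y : ℕ → ℕ)
    (hmono : ∀ c < m, y c ≤ y (c + 1)) (hym : y m = n) (i h j : ℕ) (hi : i < m) (hj : j < m)
    (hh : i = j → h = y j ∨ h = y (j + 1)) :
    ((((northSteps m n y).filter fun s =>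
    (m : ℤ) * s.2 < (m : ℤ) * h + (n : ℤ) * ((s.1 : ℤ) - (i : ℤ)) ∧
    (m : ℤ) * h + (n : ℤ) * ((s.1 : ℤ) - (i : ℤ)) < (m : ℤ) * ((s.2 : ℤ) + 1))).filter
      fun s => s.1 = j).card = colInd m n y i h j := by
  have hm' : (0 : ℤ) < m := by exact_mod_cast hm
  unfold colInd
  split_ifs with hc
  · obtain ⟨h1, h2⟩ := hc
    have hij : i ≠ j := by
      rintro rfl
      rcases hh rfl with rfl | rfl <;> simp at h1 h2
    set L : ℤ := (m : ℤ) * h + (n : ℤ) * ((j : ℤ) - (i : ℤ)) with hL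
    have hq1 : (m : ℤ) * (L / m) ≤ L := Int.mul_ediv_self_le hm'.ne'
    have hq2 : L < (m : ℤ) * (L / m + 1) := by
      have := Int.lt_ediv_add_one_mul_self L hm'
      linarith
    have hq1' : (m : ℤ) * (L / m) < L :=
      lt_of_le_of_ne hq1 (ne_aux m n hcop i j hi hj hij h (L / m)).symm
    have hlo : (y j : ℤ) < L / m + 1 := lt_of_mul_lt_mul_left (h1.trans hq2) hm'.le
    have hup : L / m < (y (j + 1) : ℤ) := lt_of_mul_lt_mul_left (hq1.trans_lt h2) hm'.le
    obtain ⟨q, hq⟩ : ∃ q : ℕ, L / m = q := ⟨(L / m).toNat, by omega⟩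
    rw [hq] at hq1' hq2 hlo hup
    have hyn := y_mono_aux m y hmono (j + 1) hj
    rw [Finset.card_eq_one]
    refine ⟨(j, q), ?_⟩
    ext ⟨c, t⟩
    simp only [northSteps, Finset.mem_filter, Finset.mem_product, Finset.mem_range,
      Finset.mem_singleton, Prod.mk.injEq]
    constructor
    · rintro ⟨⟨_, h3, h4⟩, rfl⟩
      refine ⟨rfl, ?_⟩
      have e1 : (t : ℤ) < q + 1 := lt_of_mul_lt_mul_left (h3.trans hq2) hm'.le
      have e2 : (q : ℤ) < t + 1 := lt_of_mul_lt_mul_left (hq1'.trans h4) hm'.le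
      omega
    · rintro ⟨rfl, rfl⟩
      refine ⟨⟨⟨⟨hj, ?_⟩, ?_, ?_⟩, hq1', hq2⟩, rfl⟩ <;> omega
  · rw [Finset.card_eq_zero, Finset.filter_eq_empty_iff]
    rintro ⟨c, t⟩ hs rfl
    simp only [northSteps, Finset.mem_filter, Finset.mem_product, Finset.mem_range] at hs hc
    obtain ⟨⟨_, h1, h2⟩, h3, h4⟩ := hs
    apply hc
    have e1 : (m : ℤ) * y c ≤ m * t := by gcongr
    have e2 : (m : ℤ) * (t + 1) ≤ m * y (c + 1) := by
      have : (t : ℤ) + 1 ≤ y (c + 1) := by exact_mod_cast h2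
      gcongr
    exact ⟨e1.trans_lt h3, h4.trans_le e2⟩

theorem kNum_eq (m n : ℕ) (hm : 0 < m) (hcop : Nat.Coprime m n) (y : ℕ → ℕ)
    (hmono : ∀ c < m, y c ≤ y (c + 1)) (hym : y m = n) (i h : ℕ) (hi : i < m)
    (hh : h = y i ∨ h = y (i + 1)) :
    kNum m n y (i, h) = ∑ j ∈ colS m y, colInd m n y i h j := by
  unfold kNum
  rw [Finset.card_eq_sum_card_fiberwise (f := Prod.fst) (t := colS m y)]
  · apply Finset.sum_congr rfl
    intro j hj
    simp only [colS, Finset.mem_filter, Finset.mem_range] at hj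
    exact col_card m n hm hcop y hmono hym i h j hi hj.1 (by rintro rfl; exact hh)
  · rintro ⟨c, t⟩ hs
    simp only [northSteps, colS, Finset.coe_filter, Finset.mem_filter, Finset.mem_product,
      Finset.mem_range, Set.mem_ofPred_eq] at hs ⊢
    omega

theorem colInd_symm (m n : ℕ) (hm : 0 < m) (hcop : Nat.Coprime m n) (y : ℕ → ℕ)
    (i j : ℕ) (hi : i ∈ colS m y) (hj : j ∈ colS m y) :
    colInd m n y i (y i) j + colInd m n y j (y j) i =
    colInd m n y i (y (i + 1)) j + colInd m n y j (y (j + 1)) i := by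
  have hm' : (0 : ℤ) < m := by exact_mod_cast hm
  simp only [colS, Finset.mem_filter, Finset.mem_range] at hi hj
  by_cases hij : i = j
  · subst hij; simp [colInd]
  have n1 := ne_aux m n hcop i j hi.1 hj.1 hij (y i) (y j)
  have n2 := ne_aux m n hcop i j hi.1 hj.1 hij (y (i + 1)) (y j)
  have n3 := ne_aux m n hcop i j hi.1 hj.1 hij (y i) (y (j + 1))
  have n4 := ne_aux m n hcop i j hi.1 hj.1 hij (y (i + 1)) (y (j + 1))
  have l1 : (m : ℤ) * y i < m * y (i + 1) := by
    have := hi.2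
    gcongr
  have l2 : (m : ℤ) * y j < m * y (j + 1) := by
    have := hj.2
    gcongr
  have e : (n : ℤ) * ((i : ℤ) - j) = - ((n : ℤ) * ((j : ℤ) - i)) := by ring
  unfold colInd
  rw [e]
  generalize (n : ℤ) * ((j : ℤ) - i) = d at *
  generalize (m : ℤ) * y i = a at *
  generalize (m : ℤ) * y j = b at *
  generalize (m : ℤ) * y (i + 1) = a' at *
  generalize (m : ℤ) * y (j + 1) = b' at *
  split_ifs <;> omega

theorem sum_col (m n : ℕ) (hm : 0 < m) (hcop : Nat.Coprime m n) (y : ℕ → ℕ)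
    (hmono : ∀ c < m, y c ≤ y (c + 1)) (hym : y m = n) :
    ∑ i ∈ colS m y, kNum m n y (i, y i) = ∑ i ∈ colS m y, kNum m n y (i, y (i + 1)) := by
  have hS : ∀ i ∈ colS m y, i < m := by
    intro i hi
    simp only [colS, Finset.mem_filter, Finset.mem_range] at hi
    exact hi.1
  rw [Finset.sum_congr rfl fun i hi => kNum_eq m n hm hcop y hmono hym i _ (hS i hi) (Or.inl rfl),
    Finset.sum_congr rfl fun i hi => kNum_eq m n hm hcop y hmono hym i _ (hS i hi) (Or.inr rfl)]
  have key : ∑ i ∈ colS m y, ∑ j ∈ colS m y,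
      (colInd m n y i (y i) j + colInd m n y j (y j) i) =
      ∑ i ∈ colS m y, ∑ j ∈ colS m y,
      (colInd m n y i (y (i + 1)) j + colInd m n y j (y (j + 1)) i) :=
    Finset.sum_congr rfl fun i hi => Finset.sum_congr rfl fun j hj =>
      colInd_symm m n hm hcop y i j hi hj
  simp only [Finset.sum_add_distrib] at key
  rw [Finset.sum_comm (f := fun i j => colInd m n y j (y j) i),
    Finset.sum_comm (f := fun i j => colInd m n y j (y (j + 1)) i)] at key
  omega

theorem innerV_sum_col (m n : ℕ) (hm : 0 < m) (y : ℕ → ℕ) (hy0 : y 0 = 0)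
    (hmono : ∀ c < m, y c ≤ y (c + 1)) (hym : y m = n)
    (habove : ∀ c, 1 ≤ c → c ≤ m → n * c ≤ m * y c) :
    ∑ p ∈ innerV m n y, kNum m n y p = ∑ i ∈ colS m y, kNum m n y (i, y i) := by
  have h0 : kNum m n y (0, y 0) = 0 := by
    unfold kNum
    rw [Finset.card_eq_zero, Finset.filter_eq_empty_iff]
    rintro ⟨c, t⟩ hs ⟨h1, _⟩
    simp only [northSteps, Finset.mem_filter, Finset.mem_product, Finset.mem_range] at hs
    have h2 : n * c ≤ m * t := by
      rcases Nat.eq_zero_or_pos c with rfl | hc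
      · simp
      · exact (habove c hc hs.1.1.le).trans (Nat.mul_le_mul_left m hs.2.1)
    simp only [hy0] at h1
    zify at h2
    push_cast at h1
    linarith
  have hsub : ∑ i ∈ (colS m y).filter (fun i => 1 ≤ i), kNum m n y (i, y i) =
      ∑ i ∈ colS m y, kNum m n y (i, y i) := by
    apply Finset.sum_subset (Finset.filter_subset _ _)
    intro i hi hn
    have : i = 0 := by
      simp only [Finset.mem_filter, hi, true_and] at hn
      omega
    rw [this]; exact h0
  rw [← hsub]
  refine Finset.sum_nbij' Prod.fst (fun i => (i, y i)) ?_ ?_ ?_ ?_ ?_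
  · rintro ⟨a, b⟩ h
    simp only [innerV, colS, true_and, Finset.mem_filter, Finset.mem_product, Finset.mem_range] at h ⊢
    omega
  · intro i h
    simp only [innerV, colS, true_and, Finset.mem_filter, Finset.mem_product, Finset.mem_range] at h ⊢
    have := y_mono_aux m y hmono i h.1.1.le
    omega
  · rintro ⟨a, b⟩ h
    simp only [innerV, Finset.mem_filter] at h
    simp [h.2.2.2.1]
  · intro i h; rfl
  · rintro ⟨a, b⟩ h
    simp only [innerV, Finset.mem_filter] at h
    simp [h.2.2.2.1]

theorem outerV_sum_col (m n : ℕ) (hm : 0 < m) (y : ℕ → ℕ)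
    (hmono : ∀ c < m, y c ≤ y (c + 1)) (hym : y m = n) :
    ∑ v ∈ vstar m n y, kNum m n y v = ∑ i ∈ colS m y, kNum m n y (i, y (i + 1)) := by
  have hsub : ∑ v ∈ vstar m n y, kNum m n y v = ∑ v ∈ outerV m n y, kNum m n y v := by
    apply Finset.sum_subset (Finset.filter_subset _ _)
    intro v hv hn
    simp only [Finset.mem_filter, hv, true_and, not_exists, not_and, not_lt] at hn
    unfold kNum
    rw [Finset.card_eq_zero, Finset.filter_eq_empty_iff]
    rintro ⟨c, t⟩ hs ⟨_, h1⟩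
    simp only [northSteps, Finset.mem_filter, Finset.mem_product, Finset.mem_range] at hs
    have hyn := y_mono_aux m y hmono (c + 1) hs.1.1
    have h2 := hn (c, y (c + 1)) (by
      simp only [outerV, true_and, Finset.mem_filter, Finset.mem_product, Finset.mem_range]
      omega)
    have e2 : (m : ℤ) * (t + 1) ≤ m * y (c + 1) := by
      have : (t : ℤ) + 1 ≤ y (c + 1) := by exact_mod_cast hs.2.2
      gcongr
    simp only at h1 h2
    linarith
  rw [hsub]
  refine Finset.sum_nbij' Prod.fst (fun i => (i, y (i + 1))) ?_ ?_ ?_ ?_ ?_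
  · rintro ⟨a, b⟩ h
    simp only [outerV, colS, true_and, Finset.mem_filter, Finset.mem_product, Finset.mem_range] at h ⊢
    omega
  · intro i h
    simp only [outerV, colS, true_and, Finset.mem_filter, Finset.mem_product, Finset.mem_range] at h ⊢
    have := y_mono_aux m y hmono (i + 1) h.1
    omega
  · rintro ⟨a, b⟩ h
    simp only [outerV, Finset.mem_filter] at h
    simp [h.2.2.1]
  · intro i h; rfl
  · rintro ⟨a, b⟩ h
    simp only [outerV, Finset.mem_filter] at h
    simp [h.2.2.1]

/-- For every `(m,n)`-Dyck path `π`, the sum of `k` over the inner vertices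
of `π` equals the sum of `k` over the outer vertices of `π` excluding the outer vertex
most distant from the diagonal: `Σ_{p ∈ v_*(π)} k(p) = Σ_{v ∈ v^*(π)} k(v)`. -/
theorem sum_kNum_innerV_eq_sum_kNum_vstar (m n : ℕ) (hm : 0 < m) (hn : 0 < n)
    (hcop : Nat.Coprime m n) (y : ℕ → ℕ) (hy0 : y 0 = 0)
    (hmono : ∀ c < m, y c ≤ y (c + 1)) (hym : y m = n)
    (habove : ∀ c, 1 ≤ c → c ≤ m → n * c ≤ m * y c) :
    ∑ p ∈ innerV m n y, kNum m n y p = ∑ v ∈ vstar m n y, kNum m n y v := by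
  rw [innerV_sum_col m n hm y hy0 hmono hym habove, outerV_sum_col m n hm y hmono hym]
  exact sum_col m n hm hcop y hmono hym
end

section
/- For every (m,n)-Dyck path π, the identity of integers h₊(π) − (m−1)(n−1)/2 − Σ_{v ∈ v^*(π)} k(v) = −( Σ_{p ∈ i(π)} k(p) + Σ_{p ∈ v_*(π)} k(p) ) holds. -/
/-- Data extracted from a Dyck path: `X j` is the column of the north step in row `j`. -/
structure PathData (m n : ℕ) (y X : ℕ → ℕ) : Prop where
  hm : 0 < m
  hn : 0 < n
  cop : Nat.Coprime m n
  y0 : y 0 = 0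
  mono : ∀ a b, a ≤ b → b ≤ m → y a ≤ y b
  ym : y m = n
  above : ∀ c, c ≤ m → n * c ≤ m * y c
  Xlt : ∀ j < n, X j < m
  Xle : ∀ j < n, y (X j) ≤ j
  ltX : ∀ j < n, j < y (X j + 1)

/-- level of the start of the north step in row `j` -/
def lvA (m n : ℕ) (X : ℕ → ℕ) (j : ℕ) : ℤ := (m : ℤ) * j - (n : ℤ) * X j

/-- level of the end of the east step `c` -/
def lvE (m n : ℕ) (y : ℕ → ℕ) (c : ℕ) : ℤ := (m : ℤ) * y c - (n : ℤ) * c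

/-- number of north steps crossing level `l` -/
def kap (m n : ℕ) (X : ℕ → ℕ) (l : ℤ) : ℤ :=
  ∑ j ∈ Finset.range n, if lvA m n X j < l ∧ l < lvA m n X j + m then 1 else 0

lemma exists_pathData (m n : ℕ) (hm : 0 < m) (hn : 0 < n)
    (hcop : Nat.Coprime m n) (y : ℕ → ℕ) (hy0 : y 0 = 0)
    (hmono : ∀ c < m, y c ≤ y (c + 1)) (hym : y m = n)
    (habove : ∀ c, 1 ≤ c → c ≤ m → n * c ≤ m * y c) : ∃ X, PathData m n y X := by
  have mono : ∀ a b, a ≤ b → b ≤ m → y a ≤ y b := by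
    intro a b hab
    induction b, hab using Nat.le_induction with
    | base => intro _; exact le_rfl
    | succ b hb ih => intro h; exact (ih (by omega)).trans (hmono b (by omega))
  have hex : ∀ j, ∃ x, j < n → x < m ∧ y x ≤ j ∧ j < y (x + 1) := by
    intro j
    by_cases hj : j < n
    · have h : ∃ x, j < y (x + 1) := ⟨m - 1, by rw [Nat.sub_add_cancel hm, hym]; exact hj⟩
      classical
      refine ⟨Nat.find h, fun _ => ⟨?_, ?_, Nat.find_spec h⟩⟩
      · have : Nat.find h ≤ m - 1 :=
          Nat.find_min' h (by rw [Nat.sub_add_cancel hm, hym]; exact hj)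
        omega
      · by_cases h0 : Nat.find h = 0
        · rw [h0, hy0]; exact Nat.zero_le _
        · have := Nat.find_min h (m := Nat.find h - 1) (by omega)
          rw [Nat.sub_add_cancel (by omega)] at this
          omega
    · exact ⟨0, fun h => absurd h hj⟩
  choose X hX using hex
  refine ⟨X, hm, hn, hcop, hy0, mono, hym, ?_, fun j hj => (hX j hj).1,
    fun j hj => (hX j hj).2.1, fun j hj => (hX j hj).2.2⟩
  intro c hc
  rcases Nat.eq_zero_or_pos c with rfl | h
  · simp
  · exact habove c h hc

namespace PathData
variable {m n : ℕ} {y X : ℕ → ℕ}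

lemma y_le (P : PathData m n y X) {c : ℕ} (hc : c ≤ m) : y c ≤ n := by
  have := P.mono c m hc le_rfl
  rwa [P.ym] at this

lemma X_eq (P : PathData m n y X) {c j : ℕ} (hc : c < m) (h1 : y c ≤ j) (h2 : j < y (c + 1)) :
    X j = c := by
  have hj : j < n := lt_of_lt_of_le h2 (P.y_le hc)
  have a1 := P.Xlt j hj
  have a2 := P.Xle j hj
  have a3 := P.ltX j hj
  rcases lt_trichotomy (X j) c with h | h | h
  · have := P.mono (X j + 1) c h hc.le
    omega
  · exact h
  · have := P.mono (c + 1) (X j) h a1.le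
    omega

lemma A_nonneg (P : PathData m n y X) {j : ℕ} (hj : j < n) : 0 ≤ lvA m n X j := by
  have h1 := P.above (X j) (P.Xlt j hj).le
  have h2 := Nat.mul_le_mul_left m (P.Xle j hj)
  have : n * X j ≤ m * j := h1.trans h2
  unfold lvA
  have h : (n : ℤ) * X j ≤ m * j := by exact_mod_cast this
  linarith

lemma E_zero (P : PathData m n y X) : lvE m n y 0 = 0 := by simp [lvE, P.y0]

lemma E_last (P : PathData m n y X) : lvE m n y m = 0 := by
  simp [lvE, P.ym]; ring

/-- prefix balance -/
lemma balance_run (P : PathData m n y X) (F : ℤ → ℤ) (c : ℕ) (hc : c < m)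
    (h0 : ∑ i ∈ Finset.range (y c), (F (lvA m n X i + m) - F (lvA m n X i))
      + ∑ d ∈ Finset.range c, (F (lvE m n y (d + 1)) - F (lvE m n y (d + 1) + n))
      = F (lvE m n y c) - F 0) (k : ℕ) (hk : y c ≤ k) (hk2 : k ≤ y (c + 1)) :
    ∑ i ∈ Finset.range k, (F (lvA m n X i + m) - F (lvA m n X i))
      + ∑ d ∈ Finset.range c, (F (lvE m n y (d + 1)) - F (lvE m n y (d + 1) + n))
      = F ((m : ℤ) * k - n * c) - F 0 := by
  induction k, hk using Nat.le_induction with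
  | base => exact h0
  | succ k hk ih =>
    have ih := ih (by omega)
    rw [Finset.sum_range_succ]
    have hx : lvA m n X k = (m : ℤ) * k - n * c := by
      rw [lvA, P.X_eq hc hk (by omega)]
    have e : ((m : ℤ) * ((k + 1 : ℕ) : ℤ) - n * c) = lvA m n X k + m := by
      rw [hx]; push_cast; ring
    rw [e]
    rw [← hx] at ih
    linarith

lemma balance (P : PathData m n y X) (F : ℤ → ℤ) (c : ℕ) (hc : c ≤ m) :
    ∑ i ∈ Finset.range (y c), (F (lvA m n X i + m) - F (lvA m n X i))
      + ∑ d ∈ Finset.range c, (F (lvE m n y (d + 1)) - F (lvE m n y (d + 1) + n))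
      = F (lvE m n y c) - F 0 := by
  induction c with
  | zero => simp [P.y0, lvE]
  | succ c ih =>
    have h := P.balance_run F c (by omega) (ih (by omega)) (y (c + 1))
      (P.mono _ _ (by omega) hc) le_rfl
    rw [Finset.sum_range_succ _ c]
    have e : ((m : ℤ) * y (c + 1) - n * c) = lvE m n y (c + 1) + n := by
      simp [lvE]; ring
    rw [e] at h
    linarith

lemma balance_pre (P : PathData m n y X) (F : ℤ → ℤ) (j : ℕ) (hj : j < n) :
    ∑ i ∈ Finset.range j, (F (lvA m n X i + m) - F (lvA m n X i))
      + ∑ d ∈ Finset.range (X j), (F (lvE m n y (d + 1)) - F (lvE m n y (d + 1) + n))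
      = F (lvA m n X j) - F 0 :=
  P.balance_run F (X j) (P.Xlt j hj) (P.balance F _ (P.Xlt j hj).le) j (P.Xle j hj)
    (P.ltX j hj).le

lemma balance_pre' (P : PathData m n y X) (F : ℤ → ℤ) (j : ℕ) (hj : j < n) :
    ∑ i ∈ Finset.range n, (if i < j then (F (lvA m n X i + m) - F (lvA m n X i)) else 0)
      + ∑ d ∈ Finset.range m,
        (if d < X j then (F (lvE m n y (d + 1)) - F (lvE m n y (d + 1) + n)) else 0)
      = F (lvA m n X j) - F 0 := by
  rw [← P.balance_pre F j hj, ← Finset.sum_filter, ← Finset.sum_filter]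
  have := P.Xlt j hj
  congr 2 <;> ext a <;> simp <;> omega

lemma balance_suf (P : PathData m n y X) (F : ℤ → ℤ) (j : ℕ) (hj : j < n) :
    ∑ i ∈ Finset.range n, (if j < i then (F (lvA m n X i + m) - F (lvA m n X i)) else 0)
      + ∑ d ∈ Finset.range m,
        (if d < X j then 0 else (F (lvE m n y (d + 1)) - F (lvE m n y (d + 1) + n)))
      = F 0 - F (lvA m n X j + m) := by
  have h1 := P.balance_pre' F j hj
  have h2 := P.balance F m le_rfl
  rw [P.ym, P.E_last] at h2
  have h3 : ∑ i ∈ Finset.range n, (F (lvA m n X i + m) - F (lvA m n X i)) =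
      ∑ i ∈ Finset.range n, (if j < i then (F (lvA m n X i + m) - F (lvA m n X i)) else 0)
      + ∑ i ∈ Finset.range n, (if i < j then (F (lvA m n X i + m) - F (lvA m n X i)) else 0)
      + (F (lvA m n X j + m) - F (lvA m n X j)) := by
    have : (F (lvA m n X j + m) - F (lvA m n X j)) = ∑ i ∈ Finset.range n,
        (if i = j then (F (lvA m n X i + m) - F (lvA m n X i)) else 0) := by
      rw [Finset.sum_ite_eq' (Finset.range n) j, if_pos (Finset.mem_range.2 hj)]
    rw [this, ← Finset.sum_add_distrib, ← Finset.sum_add_distrib]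
    refine Finset.sum_congr rfl fun i _ => ?_
    rcases lt_trichotomy i j with h | h | h
    · simp [h, h.ne, h.le]
    · simp [h]
    · simp [h, h.ne', h.le]
  have h4 : ∑ d ∈ Finset.range m, (F (lvE m n y (d + 1)) - F (lvE m n y (d + 1) + n)) =
      ∑ d ∈ Finset.range m,
        (if d < X j then 0 else (F (lvE m n y (d + 1)) - F (lvE m n y (d + 1) + n)))
      + ∑ d ∈ Finset.range m,
        (if d < X j then (F (lvE m n y (d + 1)) - F (lvE m n y (d + 1) + n)) else 0) := by
    rw [← Finset.sum_add_distrib]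
    refine Finset.sum_congr rfl fun i _ => ?_
    split_ifs <;> simp
  linarith

/-- the key double counting identity -/
lemma key (P : PathData m n y X) (G : ℤ → ℤ) :
    ∑ j ∈ Finset.range n, ∑ d ∈ Finset.range m,
      (if d < X j then
        G (lvA m n X j - lvE m n y (d + 1)) - G (lvA m n X j - lvE m n y (d + 1) - n)
      else
        G (lvE m n y (d + 1) - lvA m n X j - m) - G (lvE m n y (d + 1) + n - lvA m n X j - m))
    = ∑ j ∈ Finset.range n, (G (- lvA m n X j - m) - G (lvA m n X j)) := by
  have h1 := fun j (hj : j ∈ Finset.range n) =>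
    P.balance_pre' (fun t => G (lvA m n X j - t)) j (Finset.mem_range.1 hj)
  have h2 := fun j (hj : j ∈ Finset.range n) =>
    P.balance_suf (fun t => G (t - lvA m n X j - m)) j (Finset.mem_range.1 hj)
  have s1 := Finset.sum_congr rfl h1
  have s2 := Finset.sum_congr rfl h2
  rw [Finset.sum_add_distrib] at s1 s2
  have hc : ∑ j ∈ Finset.range n, ∑ i ∈ Finset.range n,
      (if i < j then (G (lvA m n X j - (lvA m n X i + m)) - G (lvA m n X j - lvA m n X i)) else 0)
      = - ∑ j ∈ Finset.range n, ∑ i ∈ Finset.range n,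
      (if j < i then (G (lvA m n X i + m - lvA m n X j - m) - G (lvA m n X i - lvA m n X j - m))
        else 0) := by
    rw [Finset.sum_comm, ← Finset.sum_neg_distrib]
    refine Finset.sum_congr rfl fun i _ => ?_
    rw [← Finset.sum_neg_distrib]
    refine Finset.sum_congr rfl fun j _ => ?_
    split_ifs
    · rw [show lvA m n X j + m - lvA m n X i - m = lvA m n X j - lvA m n X i by ring,
        show lvA m n X j - (lvA m n X i + m) = lvA m n X j - lvA m n X i - m by ring]
      ring
    · simp
  have e : ∑ j ∈ Finset.range n, ∑ d ∈ Finset.range m,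
      (if d < X j then
        G (lvA m n X j - lvE m n y (d + 1)) - G (lvA m n X j - lvE m n y (d + 1) - n)
      else
        G (lvE m n y (d + 1) - lvA m n X j - m) - G (lvE m n y (d + 1) + n - lvA m n X j - m))
      = ∑ j ∈ Finset.range n, ∑ d ∈ Finset.range m,
        (if d < X j then (G (lvA m n X j - lvE m n y (d + 1))
          - G (lvA m n X j - (lvE m n y (d + 1) + n))) else 0)
      + ∑ j ∈ Finset.range n, ∑ d ∈ Finset.range m,
        (if d < X j then 0 else (G (lvE m n y (d + 1) - lvA m n X j - m)
          - G (lvE m n y (d + 1) + n - lvA m n X j - m))) := by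
    rw [← Finset.sum_add_distrib]
    refine Finset.sum_congr rfl fun j _ => ?_
    rw [← Finset.sum_add_distrib]
    refine Finset.sum_congr rfl fun d _ => ?_
    split_ifs
    · rw [add_zero, sub_add_eq_sub_sub]
    · rw [zero_add]
  have e2 : ∑ j ∈ Finset.range n, (G (- lvA m n X j - m) - G (lvA m n X j)) =
      ∑ j ∈ Finset.range n, (G (lvA m n X j - lvA m n X j) - G (lvA m n X j - 0))
      + ∑ j ∈ Finset.range n, (G (0 - lvA m n X j - m)
        - G (lvA m n X j + m - lvA m n X j - m)) := by
    rw [← Finset.sum_add_distrib]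
    refine Finset.sum_congr rfl fun j _ => ?_
    rw [show lvA m n X j + m - lvA m n X j - m = 0 by ring]
    simp
  rw [e, e2]
  linarith

lemma sum_floor (P : PathData m n y X) :
    ∑ j ∈ Finset.range n, ((m : ℤ) * j / n) = (((m - 1) * (n - 1) / 2 : ℕ) : ℤ) := by
  have hn := P.hn
  have hm := P.hm
  have key : 2 * ∑ j ∈ Finset.range n, (m * j / n) = (m - 1) * (n - 1) := by
    obtain ⟨N, rfl⟩ : ∃ N, n = N + 1 := ⟨n - 1, by omega⟩
    rw [Finset.sum_range_succ']
    simp only [Nat.mul_zero, Nat.zero_div, Nat.add_zero, Nat.add_sub_cancel]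
    rw [two_mul]
    nth_rewrite 2 [← Finset.sum_range_reflect]
    rw [← Finset.sum_add_distrib, Finset.sum_congr rfl (g := fun _ => m - 1)]
    · simp [mul_comm]
    intro j hj
    have hj := Finset.mem_range.1 hj
    have hnd : ¬ (N + 1) ∣ m * (j + 1) := by
      intro h
      have := (Nat.Coprime.dvd_mul_left P.cop.symm).1 h
      have := Nat.le_of_dvd (by omega) this
      omega
    have e : N - 1 - j + 1 = N - j := by omega
    rw [e]
    have hs : m * (j + 1) + m * (N - j) = m * (N + 1) := by
      rw [← Nat.mul_add]; congr 1; omega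
    have d1 := Nat.div_add_mod (m * (j + 1)) (N + 1)
    have d2 := Nat.div_add_mod (m * (N - j)) (N + 1)
    have l1 := Nat.mod_lt (m * (j + 1)) hn
    have l2 := Nat.mod_lt (m * (N - j)) hn
    have l3 : 0 < m * (j + 1) % (N + 1) := by
      rcases Nat.eq_zero_or_pos (m * (j + 1) % (N + 1)) with h | h
      · exact absurd (Nat.dvd_of_mod_eq_zero h) hnd
      · exact h
    generalize m * (j + 1) / (N + 1) = q1 at *
    generalize m * (N - j) / (N + 1) = q2 at *
    generalize m * (j + 1) % (N + 1) = r1 at *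
    generalize m * (N - j) % (N + 1) = r2 at *
    have h1 : (N + 1) * (q1 + q2) < (N + 1) * m := by nlinarith
    have h2 : (N + 1) * m < (N + 1) * (q1 + q2 + 2) := by nlinarith
    have := lt_of_mul_lt_mul_left h1 (Nat.zero_le _)
    have := lt_of_mul_lt_mul_left h2 (Nat.zero_le _)
    omega
  rw [← key, Nat.mul_div_cancel_left _ (by norm_num)]
  push_cast
  rfl

lemma sum_north (P : PathData m n y X) (g : ℕ × ℕ → ℤ) :
    ∑ s ∈ northSteps m n y, g s = ∑ j ∈ Finset.range n, g (X j, j) := by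
  symm
  refine Finset.sum_bij (fun j _ => (X j, j)) ?_ ?_ ?_ ?_
  · intro j hj
    have hj := Finset.mem_range.1 hj
    simp only [northSteps, Finset.mem_filter, Finset.mem_product, Finset.mem_range]
    exact ⟨⟨P.Xlt j hj, hj⟩, P.Xle j hj, P.ltX j hj⟩
  · intro a _ b _ h
    exact (Prod.mk.inj h).2
  · rintro ⟨c, j⟩ h
    simp only [northSteps, Finset.mem_filter, Finset.mem_product, Finset.mem_range] at h
    exact ⟨j, Finset.mem_range.2 h.1.2, by rw [P.X_eq h.1.1 h.2.1 h.2.2]⟩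
  · intros; rfl

lemma kNum_eq (P : PathData m n y X) (p : ℕ × ℕ) :
    (kNum m n y p : ℤ) = kap m n X ((m : ℤ) * p.2 - n * p.1) := by
  rw [kNum, Finset.card_filter]
  push_cast
  rw [P.sum_north (fun s => if (m : ℤ) * s.2 < (m : ℤ) * p.2 + (n : ℤ) * ((s.1 : ℤ) - (p.1 : ℤ)) ∧
    (m : ℤ) * p.2 + (n : ℤ) * ((s.1 : ℤ) - (p.1 : ℤ)) < (m : ℤ) * ((s.2 : ℤ) + 1) then 1 else 0),
    kap]
  refine Finset.sum_congr rfl fun j _ => ?_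
  refine if_congr ?_ rfl rfl
  simp only [lvA]
  constructor <;> rintro ⟨h1, h2⟩ <;> constructor <;> linarith

lemma sum_Icc (f : ℕ → ℤ) : ∑ c ∈ Finset.Icc 1 m, f c = ∑ d ∈ Finset.range m, f (d + 1) := by
  rw [Finset.range_eq_Ico, Finset.sum_Ico_add']
  rfl

lemma hplus_eq (P : PathData m n y X) :
    (hplus m n y : ℤ) = ∑ j ∈ Finset.range n, ∑ d ∈ Finset.range m,
      if d < X j then (if lvE m n y (d + 1) < lvA m n X j + m ∧
        lvA m n X j < lvE m n y (d + 1) + n then 1 else 0) else 0 := by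
  rw [hplus, oSet, Finset.filter_filter, Finset.card_filter, Finset.sum_product, eastSteps]
  push_cast
  rw [sum_Icc (m := m) (fun c => ∑ s ∈ northSteps m n y, _), Finset.sum_comm]
  rw [P.sum_north]
  refine Finset.sum_congr rfl fun j _ => Finset.sum_congr rfl fun d _ => ?_
  rw [← ite_and]
  refine if_congr ?_ rfl rfl
  simp only [lvA, lvE]
  push_cast
  constructor
  · rintro ⟨h1, h2, h3⟩
    exact ⟨h1, by linarith, by linarith⟩
  · rintro ⟨h1, h2, h3⟩
    exact ⟨h1, by linarith, by linarith⟩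

lemma i_count (P : PathData m n y X) (j : ℕ) (hj : j < n) :
    ((iSet m n y).filter fun p => lvA m n X j < (m : ℤ) * p.2 - n * p.1 ∧
      (m : ℤ) * p.2 - n * p.1 < lvA m n X j + m).card =
    ((Finset.Icc 1 m).filter fun c => lvA m n X j + m ≤ lvE m n y c).card := by
  have hA := P.A_nonneg hj
  have hm : (0 : ℤ) < m := by exact_mod_cast P.hm
  have hXlt := P.Xlt j hj
  refine Finset.card_bij (fun p _ => p.1) ?_ ?_ ?_
  · rintro ⟨c, b⟩ h
    simp only [iSet, Finset.mem_filter, Finset.mem_product, Finset.mem_Icc,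
      Finset.mem_range] at h ⊢
    obtain ⟨⟨⟨⟨h1, h2⟩, h3⟩, h4, h5⟩, h6, h7⟩ := h
    refine ⟨⟨h1, by omega⟩, ?_⟩
    by_contra hlt
    push Not at hlt
    have h5' : (b : ℤ) + 1 ≤ y c := by exact_mod_cast h5
    have : (m : ℤ) * (b + 1) ≤ m * y c := mul_le_mul_of_nonneg_left h5' hm.le
    simp only [lvE] at hlt
    nlinarith
  · rintro ⟨c, b⟩ h ⟨c', b'⟩ h' hcc
    simp only [Finset.mem_filter] at h h' hcc
    subst hcc
    obtain ⟨-, h6, h7⟩ := h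
    obtain ⟨-, h8, h9⟩ := h'
    have l1 : (m : ℤ) * (b - b') < m * 1 := by linarith
    have l2 : (m : ℤ) * (b' - b) < m * 1 := by linarith
    have := lt_of_mul_lt_mul_left l1 hm.le
    have := lt_of_mul_lt_mul_left l2 hm.le
    have : b = b' := by omega
    rw [this]
  · intro c hc
    simp only [Finset.mem_filter, Finset.mem_Icc] at hc
    obtain ⟨⟨h1, h2⟩, h3⟩ := hc
    have hcm : c ≠ m := by
      rintro rfl
      rw [P.E_last] at h3
      linarith
    have hcX : c ≠ X j := by
      rintro rfl
      have : (y (X j) : ℤ) ≤ j := by exact_mod_cast P.Xle j hj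
      have := mul_le_mul_of_nonneg_left this hm.le
      simp only [lvE, lvA] at h3
      linarith
    have hr0 : 0 ≤ lvA m n X j + n * c := by positivity
    have hd := Int.mul_ediv_add_emod (lvA m n X j + n * c) m
    have hr1 := Int.emod_nonneg (lvA m n X j + n * c) hm.ne'
    have hr2 := Int.emod_lt_of_pos (lvA m n X j + n * c) hm
    have hq := Int.ediv_nonneg hr0 hm.le
    have hr3 : (lvA m n X j + n * c) % m ≠ 0 := by
      intro h
      have hdv : (m : ℤ) ∣ n * (c - X j) := by
        have h' := Int.dvd_of_emod_eq_zero h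
        have : (n : ℤ) * (c - X j) = (lvA m n X j + n * c) - m * j := by
          simp only [lvA]; ring
        rw [this]
        exact dvd_sub h' (dvd_mul_right _ _)
      have hc1 : IsCoprime (m : ℤ) n := Nat.isCoprime_iff_coprime.2 P.cop
      have := hc1.dvd_of_dvd_mul_left hdv
      have := Int.eq_zero_of_abs_lt_dvd this (by rw [abs_lt]; constructor <;> omega)
      omega
    generalize hQ : (lvA m n X j + n * c) / m = q at *
    generalize (lvA m n X j + n * c) % m = r at *
    obtain ⟨q, rfl⟩ := Int.eq_ofNat_of_zero_le hq
    have hr3' : 0 < r := by omega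
    have w1 : lvA m n X j < (m : ℤ) * ((q + 1 : ℕ) : ℤ) - n * c := by
      push_cast; linarith
    have w2 : (m : ℤ) * ((q + 1 : ℕ) : ℤ) - n * c < lvA m n X j + m := by
      push_cast; linarith
    have hy : q + 1 < y c := by
      have : (m : ℤ) * ((q + 1 : ℕ) : ℤ) < m * (y c : ℤ) := by
        simp only [lvE] at h3; linarith
      exact_mod_cast lt_of_mul_lt_mul_left this hm.le
    refine ⟨(c, q + 1), ?_, rfl⟩
    simp only [iSet, Finset.mem_filter, Finset.mem_product, Finset.mem_Icc,
      Finset.mem_range]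
    have := P.y_le h2
    refine ⟨⟨⟨⟨h1, by omega⟩, by omega⟩, ?_, hy⟩, w1, w2⟩
    have : (n : ℤ) * c < m * ((q + 1 : ℕ) : ℤ) := by linarith
    exact_mod_cast this

lemma sum_i (P : PathData m n y X) :
    ∑ p ∈ iSet m n y, (kNum m n y p : ℤ) = ∑ j ∈ Finset.range n, ∑ d ∈ Finset.range m,
      if lvA m n X j + m ≤ lvE m n y (d + 1) then 1 else 0 := by
  simp_rw [P.kNum_eq, kap]
  rw [Finset.sum_comm]
  refine Finset.sum_congr rfl fun j hj => ?_
  have := P.i_count j (Finset.mem_range.1 hj)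
  rw [Finset.card_filter, Finset.card_filter] at this
  rw [← sum_Icc (m := m) (fun c => if lvA m n X j + m ≤ lvE m n y c then 1 else 0)]
  exact_mod_cast this

lemma sum_vstar (P : PathData m n y X) :
    ∑ v ∈ vstar m n y, (kNum m n y v : ℤ) = ∑ v ∈ outerV m n y, (kNum m n y v : ℤ) := by
  refine Finset.sum_subset (Finset.filter_subset _ _) ?_
  intro v hv hnv
  rw [P.kNum_eq, kap]
  refine Finset.sum_eq_zero fun j hj => ?_
  have hj := Finset.mem_range.1 hj
  rw [if_neg]
  rintro ⟨-, h⟩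
  apply hnv
  rw [vstar, Finset.mem_filter]
  have h1 := P.Xlt j hj
  have h2 := P.Xle j hj
  have h3 := P.ltX j hj
  refine ⟨hv, (X j, y (X j + 1)), ?_, ?_⟩
  · simp only [outerV, Finset.mem_filter, Finset.mem_product, Finset.mem_range]
    have := P.y_le (c := X j + 1) h1
    refine ⟨⟨by omega, by omega⟩, by omega, trivial, by omega⟩
  · refine lt_of_lt_of_le h ?_
    have h3' : (j : ℤ) + 1 ≤ y (X j + 1) := by exact_mod_cast h3
    have := mul_le_mul_of_nonneg_left h3' (Int.natCast_nonneg m)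
    simp only [lvA]
    linarith

lemma kap_zero (P : PathData m n y X) : kap m n X 0 = 0 := by
  refine Finset.sum_eq_zero fun j hj => ?_
  have := P.A_nonneg (Finset.mem_range.1 hj)
  rw [if_neg]
  rintro ⟨h, -⟩
  linarith

lemma sum_outer (P : PathData m n y X) :
    ∑ v ∈ outerV m n y, (kNum m n y v : ℤ) = ∑ d ∈ Finset.range m,
      if y d < y (d + 1) then kap m n X (lvE m n y (d + 1) + n) else 0 := by
  have hm := P.hm
  rw [← Finset.sum_filter]
  symm
  refine Finset.sum_bij (fun d _ => (d, y (d + 1))) ?_ ?_ ?_ ?_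
  · intro d hd
    simp only [outerV, Finset.mem_filter, Finset.mem_product, Finset.mem_range] at hd ⊢
    have := P.y_le (c := d + 1) hd.1
    refine ⟨⟨by omega, by omega⟩, by omega, trivial, hd.2⟩
  · intro a _ b _ h
    exact (Prod.mk.inj h).1
  · rintro ⟨c, b⟩ h
    simp only [outerV, Finset.mem_filter, Finset.mem_product, Finset.mem_range] at h
    obtain ⟨h1, h2, h3, h4⟩ := h
    refine ⟨c, ?_, by rw [h3]⟩
    simp only [Finset.mem_filter, Finset.mem_range]
    exact ⟨by omega, h4⟩
  · intro d _
    rw [P.kNum_eq]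
    congr 1
    simp only [lvE]
    push_cast
    ring

lemma sum_inner (P : PathData m n y X) :
    ∑ v ∈ innerV m n y, (kNum m n y v : ℤ) = ∑ d ∈ Finset.range m,
      if y d < y (d + 1) then kap m n X (lvE m n y d) else 0 := by
  have hm := P.hm
  have e : ∑ d ∈ Finset.range m, (if y d < y (d + 1) then kap m n X (lvE m n y d) else 0)
      = ∑ d ∈ Finset.range m, (if 1 ≤ d ∧ y d < y (d + 1) then kap m n X (lvE m n y d) else 0) := by
    refine Finset.sum_congr rfl fun d _ => ?_
    rcases Nat.eq_zero_or_pos d with rfl | h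
    · rw [P.E_zero, P.kap_zero]; simp
    · simp [Nat.succ_le_of_lt h]
  rw [e, ← Finset.sum_filter]
  symm
  refine Finset.sum_bij (fun d _ => (d, y d)) ?_ ?_ ?_ ?_
  · intro d hd
    simp only [innerV, Finset.mem_filter, Finset.mem_product, Finset.mem_range] at hd ⊢
    have := P.y_le (c := d) hd.1.le
    refine ⟨⟨by omega, by omega⟩, by omega, by omega, trivial, hd.2.2⟩
  · intro a _ b _ h
    exact (Prod.mk.inj h).1
  · rintro ⟨c, b⟩ h
    simp only [innerV, Finset.mem_filter, Finset.mem_product, Finset.mem_range] at h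
    obtain ⟨h1, h2, h3, h4, h5⟩ := h
    refine ⟨c, ?_, by rw [h4]⟩
    simp only [Finset.mem_filter, Finset.mem_range]
    exact ⟨by omega, by omega, h5⟩
  · intro d _
    rw [P.kNum_eq]
    rfl

lemma sum_vert (P : PathData m n y X) :
    ∑ v ∈ vstar m n y, (kNum m n y v : ℤ) - ∑ v ∈ innerV m n y, (kNum m n y v : ℤ)
    = ∑ j ∈ Finset.range n, ∑ d ∈ Finset.range m,
      ((if lvA m n X j < lvE m n y (d + 1) + n ∧ lvE m n y (d + 1) + n < lvA m n X j + m
        then 1 else 0) -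
       (if lvA m n X j < lvE m n y (d + 1) ∧ lvE m n y (d + 1) < lvA m n X j + m
        then 1 else 0)) := by
  rw [P.sum_vstar, P.sum_outer, P.sum_inner, ← Finset.sum_sub_distrib, Finset.sum_comm]
  have e1 : ∑ d ∈ Finset.range m,
      ((if y d < y (d + 1) then kap m n X (lvE m n y (d + 1) + n) else 0) -
       (if y d < y (d + 1) then kap m n X (lvE m n y d) else 0))
      = ∑ d ∈ Finset.range m, (kap m n X (lvE m n y (d + 1) + n) - kap m n X (lvE m n y d)) := by
    refine Finset.sum_congr rfl fun d hd => ?_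
    have := P.mono d (d + 1) (by omega) (Finset.mem_range.1 hd)
    split_ifs with h
    · rfl
    · have : y (d + 1) = y d := by omega
      have : lvE m n y (d + 1) + n = lvE m n y d := by
        simp only [lvE, this]; push_cast; ring
      rw [this]; simp
  have e2 : ∑ d ∈ Finset.range m, kap m n X (lvE m n y d)
      = ∑ d ∈ Finset.range m, kap m n X (lvE m n y (d + 1)) := by
    have a1 := Finset.sum_range_succ (fun d => kap m n X (lvE m n y d)) m
    have a2 := Finset.sum_range_succ' (fun d => kap m n X (lvE m n y d)) m
    simp only [P.E_zero, P.E_last] at a1 a2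
    linarith
  rw [e1, Finset.sum_sub_distrib, e2, ← Finset.sum_sub_distrib]
  refine Finset.sum_congr rfl fun d _ => ?_
  rw [kap, kap, ← Finset.sum_sub_distrib]

/-- the function used for the second application of `key` -/
lemma G_diff (n : ℕ) (hn : 0 < n) (d : ℤ) :
    (if 0 ≤ d then d / (n : ℤ) + 1 else 0) - (if 0 ≤ d - n then (d - n) / (n : ℤ) + 1 else 0)
      = if 0 ≤ d then 1 else 0 := by
  have hn' : (0 : ℤ) < n := by exact_mod_cast hn
  have : (d - n) / (n : ℤ) = d / n - 1 := by
    rw [Int.sub_ediv_of_dvd _ (dvd_refl _), Int.ediv_self hn'.ne']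
  rw [this]
  split_ifs with h1 h2 h3
  · ring
  · rw [Int.ediv_eq_zero_of_lt h1 (by linarith)]; ring
  · linarith
  · ring

lemma main (P : PathData m n y X) :
    (hplus m n y : ℤ) + ∑ p ∈ iSet m n y, (kNum m n y p : ℤ)
      - (∑ v ∈ vstar m n y, (kNum m n y v : ℤ) - ∑ v ∈ innerV m n y, (kNum m n y v : ℤ))
      = (((m - 1) * (n - 1) / 2 : ℕ) : ℤ) := by
  have hn' : (0 : ℤ) < n := by exact_mod_cast P.hn
  have hm' : (0 : ℤ) < m := by exact_mod_cast P.hm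
  have k0 := P.key (fun t => if -(m : ℤ) < t then 1 else 0)
  have k1 := P.key (fun t => if 0 ≤ t then t / (n : ℤ) + 1 else 0)
  have r0 : ∑ j ∈ Finset.range n, ((if -(m : ℤ) < - lvA m n X j - m then (1 : ℤ) else 0)
      - (if -(m : ℤ) < lvA m n X j then 1 else 0)) = ∑ j ∈ Finset.range n, (-1) := by
    refine Finset.sum_congr rfl fun j hj => ?_
    have := P.A_nonneg (Finset.mem_range.1 hj)
    rw [if_neg (by linarith), if_pos (by linarith)]; rfl
  have r1 : ∑ j ∈ Finset.range n,
      ((if 0 ≤ - lvA m n X j - m then (- lvA m n X j - m) / (n : ℤ) + 1 else 0)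
      - (if 0 ≤ lvA m n X j then lvA m n X j / (n : ℤ) + 1 else 0))
      = ∑ j ∈ Finset.range n, (-(((m : ℤ) * j / n) - X j + 1)) := by
    refine Finset.sum_congr rfl fun j hj => ?_
    have := P.A_nonneg (Finset.mem_range.1 hj)
    rw [if_neg (by linarith), if_pos this, lvA, Int.sub_ediv_of_dvd _ (dvd_mul_right _ _),
      Int.mul_ediv_cancel_left _ hn'.ne']
    ring
  have hX : ∑ j ∈ Finset.range n, (X j : ℤ)
      = ∑ j ∈ Finset.range n, ∑ d ∈ Finset.range m, if d < X j then 1 else 0 := by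
    refine Finset.sum_congr rfl fun j hj => ?_
    have := P.Xlt j (Finset.mem_range.1 hj)
    rw [← Finset.sum_filter, show (Finset.range m).filter (fun d => d < X j) = Finset.range (X j) by
      ext a; simp; omega]
    simp
  rw [r0] at k0
  rw [r1, Finset.sum_neg_distrib, Finset.sum_add_distrib, Finset.sum_sub_distrib, P.sum_floor,
    hX] at k1
  rw [Finset.sum_neg_distrib] at k0
  rw [P.hplus_eq, P.sum_i, P.sum_vert]
  suffices h : ∑ j ∈ Finset.range n, ∑ d ∈ Finset.range m,
      (if d < X j then (if lvE m n y (d + 1) < lvA m n X j + m ∧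
        lvA m n X j < lvE m n y (d + 1) + n then (1 : ℤ) else 0) else 0)
      + ∑ j ∈ Finset.range n, ∑ d ∈ Finset.range m,
      (if lvA m n X j + m ≤ lvE m n y (d + 1) then (1 : ℤ) else 0)
      - ∑ j ∈ Finset.range n, ∑ d ∈ Finset.range m,
      ((if lvA m n X j < lvE m n y (d + 1) + n ∧ lvE m n y (d + 1) + n < lvA m n X j + m
        then (1 : ℤ) else 0) -
       (if lvA m n X j < lvE m n y (d + 1) ∧ lvE m n y (d + 1) < lvA m n X j + m
        then 1 else 0))
      = (∑ j ∈ Finset.range n, ∑ d ∈ Finset.range m, if d < X j then (1 : ℤ) else 0)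
       + ∑ j ∈ Finset.range n, ∑ d ∈ Finset.range m,
      (if d < X j then
        (if -(m : ℤ) < lvA m n X j - lvE m n y (d + 1) then (1 : ℤ) else 0)
          - (if -(m : ℤ) < lvA m n X j - lvE m n y (d + 1) - n then 1 else 0)
      else
        (if -(m : ℤ) < lvE m n y (d + 1) - lvA m n X j - m then 1 else 0)
          - (if -(m : ℤ) < lvE m n y (d + 1) + n - lvA m n X j - m then 1 else 0))
       - ∑ j ∈ Finset.range n, ∑ d ∈ Finset.range m,
      (if d < X j then
        (if 0 ≤ lvA m n X j - lvE m n y (d + 1) then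
          (lvA m n X j - lvE m n y (d + 1)) / (n : ℤ) + 1 else 0)
        - (if 0 ≤ lvA m n X j - lvE m n y (d + 1) - n then
          (lvA m n X j - lvE m n y (d + 1) - n) / (n : ℤ) + 1 else 0)
      else
        (if 0 ≤ lvE m n y (d + 1) - lvA m n X j - m then
          (lvE m n y (d + 1) - lvA m n X j - m) / (n : ℤ) + 1 else 0)
        - (if 0 ≤ lvE m n y (d + 1) + n - lvA m n X j - m then
          (lvE m n y (d + 1) + n - lvA m n X j - m) / (n : ℤ) + 1 else 0)) by
    linarith
  simp only [← Finset.sum_add_distrib, ← Finset.sum_sub_distrib]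
  refine Finset.sum_congr rfl fun j _ => Finset.sum_congr rfl fun d _ => ?_
  have g1 := G_diff n P.hn (lvA m n X j - lvE m n y (d + 1))
  have g2 := G_diff n P.hn (lvE m n y (d + 1) + n - lvA m n X j - m)
  rw [show lvE m n y (d + 1) + n - lvA m n X j - m - n = lvE m n y (d + 1) - lvA m n X j - m by
    ring] at g2
  rw [g1, ← neg_sub (ite (0 ≤ lvE m n y (d + 1) + n - lvA m n X j - m) _ _), g2]
  clear g1 g2 k0 k1 r0 r1 hX
  generalize lvE m n y (d + 1) = e
  generalize lvA m n X j = a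
  split_ifs <;> omega

end PathData

/-- For every `(m,n)`-Dyck path `π`, the identity of integers
`h₊(π) − (m−1)(n−1)/2 − Σ_{v ∈ v^*(π)} k(v) = −(Σ_{p ∈ i(π)} k(p) + Σ_{p ∈ v_*(π)} k(p))`
holds. -/
theorem hplus_identity (m n : ℕ) (hm : 0 < m) (hn : 0 < n)
    (hcop : Nat.Coprime m n) (y : ℕ → ℕ) (hy0 : y 0 = 0)
    (hmono : ∀ c < m, y c ≤ y (c + 1)) (hym : y m = n)
    (habove : ∀ c, 1 ≤ c → c ≤ m → n * c ≤ m * y c) :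
    (hplus m n y : ℤ) - (((m - 1) * (n - 1) / 2 : ℕ) : ℤ)
        - ∑ v ∈ vstar m n y, (kNum m n y v : ℤ)
      = -(∑ p ∈ iSet m n y, (kNum m n y p : ℤ)
          + ∑ p ∈ innerV m n y, (kNum m n y p : ℤ)) := by

  obtain ⟨X, P⟩ := exists_pathData m n hm hn hcop y hy0 hmono hym habove
  have := P.main
  linarith
end

section
/- For every (m,n)-Dyck path π and every point p = (a,b) ∈ i(π), the number of north steps of π lying in the region x ≤ a whose interior is intersected by the line through p parallel to the diagonal exceeds by exactly 1 the number of east steps of π lying in the region x ≤ a whose interior is intersected by that line. -/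
theorem step_count_aux (m n : ℕ) (hm : 0 < m) (y : ℕ → ℕ) (t : ℕ → ℤ)
    (hy0 : y 0 = 0) (ht0 : 0 < t 0) (ht : ∀ k, t (k + 1) = t k + n)
    (hmono : ∀ c < m, y c ≤ y (c + 1)) (hle : ∀ c ≤ m, y c ≤ n) (a : ℕ) (ham : a < m)
    (hne : ∀ k < a, ∀ j : ℕ, (m : ℤ) * j ≠ t k) (hya : t a < (m : ℤ) * y a) (k : ℕ) (hk : k ≤ a) :
    ((northSteps m n y).filter fun s => s.1 < k ∧
        ((m : ℤ) * s.2 < t s.1 ∧ t s.1 < (m : ℤ) * ((s.2 : ℤ) + 1))).card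
      = ((eastSteps m).filter fun c => c ≤ k ∧
        (t c - n < (m : ℤ) * y c ∧ (m : ℤ) * y c < t c)).card
        + if t k < (m : ℤ) * y k then 1 else 0 := by
  have hm' : (0 : ℤ) < m := by exact_mod_cast hm
  induction k with
  | zero =>
    have h1 : ¬ t 0 < (m : ℤ) * y 0 := by simp [hy0]; omega
    rw [if_neg h1, Finset.filter_false_of_mem, Finset.filter_false_of_mem]
    · simp
    · intro c hc
      simp [eastSteps] at hc
      omega
    · intro s _
      omega
  | succ k ih =>
    have ih := ih (by omega)
    have hE : ((eastSteps m).filter fun c => c ≤ k + 1 ∧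
        (t c - n < (m : ℤ) * y c ∧ (m : ℤ) * y c < t c)).card
        = ((eastSteps m).filter fun c => c ≤ k ∧
        (t c - n < (m : ℤ) * y c ∧ (m : ℤ) * y c < t c)).card
        + if t k < (m : ℤ) * y (k + 1) ∧ (m : ℤ) * y (k + 1) < t (k + 1) then 1 else 0 := by
      split_ifs with h
      · rw [← Finset.card_insert_of_notMem (a := k + 1) (by simp)]
        congr 1
        ext c
        simp only [eastSteps, Finset.mem_filter, Finset.mem_insert, Finset.mem_Icc]
        constructor
        · rintro ⟨h1, h2, h3⟩
          by_cases hc : c = k + 1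
          · exact Or.inl hc
          · exact Or.inr ⟨h1, by omega, h3⟩
        · rintro (rfl | ⟨h1, h2, h3⟩)
          · refine ⟨by omega, le_rfl, ?_, h.2⟩
            rw [ht]; linarith [h.1]
          · exact ⟨h1, by omega, h3⟩
      · rw [add_zero]
        congr 1
        ext c
        simp only [eastSteps, Finset.mem_filter, Finset.mem_Icc]
        constructor
        · rintro ⟨h1, h2, h3⟩
          refine ⟨h1, ?_, h3⟩
          by_contra hc
          obtain rfl : c = k + 1 := by omega
          rw [ht] at h3
          exact h ⟨by linarith [h3.1], by rw [ht]; exact h3.2⟩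
        · rintro ⟨h1, h2, h3⟩
          exact ⟨h1, by omega, h3⟩
    have hN : ((northSteps m n y).filter fun s => s.1 < k + 1 ∧
        ((m : ℤ) * s.2 < t s.1 ∧ t s.1 < (m : ℤ) * ((s.2 : ℤ) + 1))).card
        = ((northSteps m n y).filter fun s => s.1 < k ∧
        ((m : ℤ) * s.2 < t s.1 ∧ t s.1 < (m : ℤ) * ((s.2 : ℤ) + 1))).card
        + if (m : ℤ) * y k < t k ∧ t k < (m : ℤ) * y (k + 1) then 1 else 0 := by
      split_ifs with h
      · obtain ⟨h1, h2⟩ := h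
        obtain ⟨j, hj⟩ : ∃ j : ℕ, (j : ℤ) = t k / m :=
          ⟨(t k / m).toNat, Int.toNat_of_nonneg (Int.ediv_nonneg (by
            have : (0 : ℤ) ≤ m * y k := by positivity
            linarith) hm'.le)⟩
        have hj1 : (m : ℤ) * j < t k := by
          refine lt_of_le_of_ne ?_ (hne k (by omega) j)
          rw [hj]; exact Int.mul_ediv_self_le hm'.ne'
        have hj2 : t k < (m : ℤ) * ((j : ℤ) + 1) := by
          rw [hj, mul_add, mul_one]
          exact Int.lt_mul_ediv_self_add hm'
        have hj3 : y k ≤ j := by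
          have : (y k : ℤ) < j + 1 := lt_of_mul_lt_mul_left (h1.trans hj2) hm'.le
          omega
        have hj4 : j < y (k + 1) := by
          have : (j : ℤ) < y (k + 1) := lt_of_mul_lt_mul_left (hj1.trans h2) hm'.le
          omega
        have := hle (k + 1) (by omega)
        rw [← Finset.card_insert_of_notMem (a := (k, j)) (by simp)]
        congr 1
        ext ⟨c, i⟩
        simp only [northSteps, Finset.mem_filter, Finset.mem_insert, Finset.mem_product,
          Finset.mem_range, Prod.mk.injEq]
        constructor
        · rintro ⟨g1, g2, g3, g4⟩
          by_cases hc : c = k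
          · subst hc
            have e1 : (i : ℤ) < j + 1 := lt_of_mul_lt_mul_left (g3.trans hj2) hm'.le
            have e2 : (j : ℤ) < i + 1 := lt_of_mul_lt_mul_left (hj1.trans g4) hm'.le
            exact Or.inl ⟨rfl, by omega⟩
          · exact Or.inr ⟨g1, by omega, g3, g4⟩
        · rintro (⟨rfl, rfl⟩ | ⟨g1, g2, g3⟩)
          · exact ⟨⟨⟨by omega, by omega⟩, hj3, hj4⟩, by omega, hj1, hj2⟩
          · exact ⟨g1, by omega, g3⟩
      · rw [add_zero]
        congr 1
        ext ⟨c, i⟩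
        simp only [northSteps, Finset.mem_filter, Finset.mem_product, Finset.mem_range]
        constructor
        · rintro ⟨g1, g2, g3, g4⟩
          refine ⟨g1, ?_, g3, g4⟩
          by_contra hc
          obtain rfl : c = k := by omega
          refine h ⟨lt_of_le_of_lt ?_ g3, lt_of_lt_of_le g4 ?_⟩
          · exact mul_le_mul_of_nonneg_left (by exact_mod_cast g1.2.1) hm'.le
          · exact mul_le_mul_of_nonneg_left (by exact_mod_cast g1.2.2) hm'.le
        · rintro ⟨g1, g2, g3⟩
          exact ⟨g1, by omega, g3⟩
    rw [hN, hE, ih, add_assoc, add_assoc]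
    congr 1
    have n1 := hne k (by omega) (y k)
    have n2 := hne k (by omega) (y (k + 1))
    have n3 : (m : ℤ) * y (k + 1) ≠ t (k + 1) := by
      by_cases h : k + 1 = a
      · rw [h]; exact hya.ne'
      · exact hne (k + 1) (by omega) _
    have n4 : (m : ℤ) * y k ≤ m * y (k + 1) :=
      mul_le_mul_of_nonneg_left (by exact_mod_cast hmono k (by omega)) hm'.le
    have n5 := ht k
    generalize (m : ℤ) * y k = u at *
    generalize (m : ℤ) * y (k + 1) = v at *
    split_ifs <;> omega

/-- For every `(m,n)`-Dyck path `π` and every point `p = (a,b) ∈ i(π)`, the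
number of north steps of `π` lying in the region `x ≤ a` (i.e. with abscissa `c ≤ a`)
whose interior is intersected by the line through `p` parallel to the diagonal exceeds by
exactly `1` the number of east steps of `π` lying in the region `x ≤ a` (i.e. east steps
`c` with `c ≤ a`) whose interior is intersected by that line. -/
theorem northCount_restricted_eq_eastCount_restricted_add_one
    (m n : ℕ) (hm : 0 < m) (hn : 0 < n)
    (hcop : Nat.Coprime m n) (y : ℕ → ℕ) (hy0 : y 0 = 0)
    (hmono : ∀ c < m, y c ≤ y (c + 1)) (hym : y m = n)
    (habove : ∀ c, 1 ≤ c → c ≤ m → n * c ≤ m * y c)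
    (p : ℕ × ℕ) (hp : p ∈ iSet m n y) :
    ((northSteps m n y).filter fun s => s.1 ≤ p.1 ∧
        ((m : ℤ) * s.2 < (m : ℤ) * p.2 + (n : ℤ) * ((s.1 : ℤ) - (p.1 : ℤ)) ∧
         (m : ℤ) * p.2 + (n : ℤ) * ((s.1 : ℤ) - (p.1 : ℤ)) < (m : ℤ) * ((s.2 : ℤ) + 1))).card
      = ((eastSteps m).filter fun c => c ≤ p.1 ∧
        ((n : ℤ) * ((c : ℤ) - 1) < (n : ℤ) * p.1 + (m : ℤ) * ((y c : ℤ) - (p.2 : ℤ)) ∧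
         (n : ℤ) * p.1 + (m : ℤ) * ((y c : ℤ) - (p.2 : ℤ)) < (n : ℤ) * (c : ℤ))).card
        + 1 := by
  obtain ⟨a, b⟩ := p
  simp only [iSet, Finset.mem_filter, Finset.mem_product, Finset.mem_Icc, Finset.mem_range] at hp
  obtain ⟨⟨⟨ha1, ha2⟩, hbn⟩, hL, hby⟩ := hp
  have hm' : (0 : ℤ) < m := by exact_mod_cast hm
  have hn' : (0 : ℤ) < n := by exact_mod_cast hn
  have ham : a < m := by omega
  have hle : ∀ c ≤ m, y c ≤ n := by
    intro c hc
    rw [← hym]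
    exact Nat.decreasingInduction (motive := fun k _ => y k ≤ y m)
      (fun k hk h => (hmono k hk).trans h) le_rfl hc
  have hya : (m : ℤ) * b + n * ((a : ℤ) - a) < (m : ℤ) * y a := by
    rw [sub_self, mul_zero, add_zero]
    exact mul_lt_mul_of_pos_left (by exact_mod_cast hby) hm'
  have key := step_count_aux m n hm y (fun c => (m : ℤ) * b + n * ((c : ℤ) - a)) hy0
    (by
      have : (n : ℤ) * a < m * b := by exact_mod_cast hL
      push_cast; linarith)
    (by intro k; push_cast; ring) hmono hle a ham
    (by
      intro k hk j h
      have h2 : (m : ℤ) * (b - j) = n * (a - k) := by linarith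
      have h3 : (m : ℤ) ∣ a - k :=
        (Nat.isCoprime_iff_coprime.mpr hcop).dvd_of_dvd_mul_left ⟨_, h2.symm⟩
      have := Int.le_of_dvd (by omega) h3
      omega)
    hya a le_rfl
  rw [if_pos hya] at key
  convert key using 2
  · ext ⟨c, j⟩
    simp only [northSteps, Finset.mem_filter, Finset.mem_product, Finset.mem_range]
    constructor
    · rintro ⟨g1, g2, g3, g4⟩
      refine ⟨g1, lt_of_le_of_ne g2 ?_, g3, g4⟩
      rintro rfl
      have : (m : ℤ) * y c ≤ m * j :=
        mul_le_mul_of_nonneg_left (by exact_mod_cast g1.2.1) hm'.le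
      linarith
    · rintro ⟨g1, g2, g3⟩
      exact ⟨g1, g2.le, g3⟩
  · congr 1
    ext c
    simp only [Finset.mem_filter]
    refine and_congr_right fun _ => and_congr_right fun _ => and_congr ?_ ?_
    · constructor <;> intro h <;> linarith
    · constructor <;> intro h <;> linarith
end

section
/- Let n ≥ 2, R = ℚ[x₁, …, xₙ], 1 ≤ i ≤ n−1, σᵢ the ℚ-algebra automorphism of R interchanging xᵢ and xᵢ₊₁, and Bᵢ = R ⊗_{R^{σᵢ}} R. Then there is an isomorphism Bᵢ ⊗_R Bᵢ ≅ Bᵢ ⊕ Bᵢ which is simultaneously left R-linear and right R-linear (an isomorphism of (R,R)-bimodules), where the tensor product Bᵢ ⊗_R Bᵢ is taken with respect to the right R-action on the first factor and the left R-action on the second, and the left (resp. right) R-action on Bᵢ = R ⊗_{R^{σᵢ}} R is multiplication in the first (resp. second) tensor factor. -/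
open MvPolynomial TensorProduct

/-- `R = ℚ[x₀, …, x_{n-1}]`. -/
abbrev PolyQ (n : ℕ) := MvPolynomial (Fin n) ℚ

/-- The `ℚ`-algebra automorphism of `R` interchanging the adjacent variables `xᵢ` and
`xᵢ₊₁` and fixing the other variables. -/
noncomputable def adjSwap (n i : ℕ) (hi : i + 1 < n) : PolyQ n ≃ₐ[ℚ] PolyQ n :=
  renameEquiv ℚ (Equiv.swap ⟨i, Nat.lt_of_succ_lt hi⟩ ⟨i + 1, hi⟩)

/-- The subalgebra `R^{σᵢ}` of polynomials invariant under the transposition of the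
variables `xᵢ` and `xᵢ₊₁`. -/
noncomputable def invariants (n i : ℕ) (hi : i + 1 < n) : Subalgebra ℚ (PolyQ n) :=
  AlgHom.equalizer (adjSwap n i hi).toAlgHom (AlgHom.id ℚ (PolyQ n))

/-- The Bott–Samelson bimodule `Bᵢ = R ⊗_{R^{σᵢ}} R`.  Its left `R`-action is
multiplication in the first tensor factor (via `includeLeft`), and its right `R`-action
is multiplication in the second tensor factor (via `includeRight`). -/
noncomputable abbrev BS (n i : ℕ) (hi : i + 1 < n) :=
  PolyQ n ⊗[invariants n i hi] PolyQ n

/-- Left inclusion `R → Bᵢ` (the left `R`-action on `Bᵢ` is multiplication by its image). -/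
noncomputable def incL (n i : ℕ) (hi : i + 1 < n) :
    PolyQ n →ₐ[invariants n i hi] BS n i hi :=
  Algebra.TensorProduct.includeLeft

/-- Right inclusion `R → Bᵢ` (the right `R`-action on `Bᵢ` is multiplication by its
image). -/
noncomputable def incR (n i : ℕ) (hi : i + 1 < n) :
    PolyQ n →ₐ[invariants n i hi] BS n i hi :=
  Algebra.TensorProduct.includeRight

/-- The `R`-module structure on `Bᵢ` given by the *right* `R`-action, i.e. multiplication
in the second tensor factor. -/
noncomputable def rightMod (n i : ℕ) (hi : i + 1 < n) : Module (PolyQ n) (BS n i hi) :=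
  Module.compHom (BS n i hi) (incR n i hi).toRingHom

/-- The tensor product `Bᵢ ⊗_R Bᵢ`, taken with respect to the right `R`-action on the
first factor and the left `R`-action on the second factor. -/
noncomputable abbrev BSTensorBS (n i : ℕ) (hi : i + 1 < n) :=
  @TensorProduct (PolyQ n) _ (BS n i hi) (BS n i hi) _ _ (rightMod n i hi) _

/-- The pure tensor `x ⊗ y` in `Bᵢ ⊗_R Bᵢ` (right `R`-action on the first factor, left
`R`-action on the second factor). -/
noncomputable def bsTmul (n i : ℕ) (hi : i + 1 < n) (x y : BS n i hi) :
    BSTensorBS n i hi :=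
  @TensorProduct.tmul (PolyQ n) _ (BS n i hi) (BS n i hi) _ _ (rightMod n i hi) _ x y


section Generic
variable {S R : Type*} [CommSemiring S] [CommSemiring R] [Algebra S R]

/-- The bilinear map `(a ⊗ b, c ⊗ d) ↦ f (b c) a ⊗ d`. -/
noncomputable def betaMap (f : R →ₗ[S] S) :
    (R ⊗[S] R) →ₗ[S] (R ⊗[S] R) →ₗ[S] (R ⊗[S] R) :=
  TensorProduct.lift (LinearMap.mk₂ S
    (fun a b => LinearMap.rTensor R
      ((LinearMap.toSpanSingleton S R a) ∘ₗ f ∘ₗ (LinearMap.mulLeft S b)))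
    (by intro a a' b; ext c d; simp [smul_add, add_tmul])
    (by intro s a b; ext c d; simp [smul_comm _ s, smul_tmul'])
    (by intro a b b'; ext c d; simp [add_mul, add_smul, add_tmul])
    (by intro s a b; ext c d; simp [mul_smul, smul_tmul']))

lemma betaMap_tmul (f : R →ₗ[S] S) (a b c d : R) :
    betaMap f (a ⊗ₜ b) (c ⊗ₜ d) = (f (b * c) • a) ⊗ₜ[S] d := by
  simp [betaMap]

lemma betaMap_balanced (f : R →ₗ[S] S) (r : R) (x y : R ⊗[S] R) :
    betaMap f ((1 ⊗ₜ r) * x) y = betaMap f x ((r ⊗ₜ 1) * y) := by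
  induction x with
  | zero => simp
  | add x x' h h' => simp only [mul_add, map_add, LinearMap.add_apply, h, h']
  | tmul a b =>
    induction y with
    | zero => simp
    | add x x' h h' => simp only [mul_add, map_add, h, h']
    | tmul c d =>
      simp only [Algebra.TensorProduct.tmul_mul_tmul, betaMap_tmul, one_mul]
      rw [mul_assoc, mul_left_comm]

lemma betaMap_left (f : R →ₗ[S] S) (r : R) (x y : R ⊗[S] R) :
    betaMap f ((r ⊗ₜ 1) * x) y = (r ⊗ₜ 1) * betaMap f x y := by
  induction x with
  | zero => simp
  | add x x' h h' => simp only [mul_add, map_add, LinearMap.add_apply, h, h']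
  | tmul a b =>
    induction y with
    | zero => simp
    | add x x' h h' => simp only [mul_add, map_add, h, h']
    | tmul c d =>
      simp only [Algebra.TensorProduct.tmul_mul_tmul, betaMap_tmul, one_mul, mul_smul_comm]

lemma betaMap_right (f : R →ₗ[S] S) (r : R) (x y : R ⊗[S] R) :
    betaMap f x (y * (1 ⊗ₜ r)) = betaMap f x y * (1 ⊗ₜ r) := by
  induction x with
  | zero => simp
  | add x x' h h' => simp only [add_mul, map_add, LinearMap.add_apply, h, h']
  | tmul a b =>
    induction y with
    | zero => simp
    | add x x' h h' => simp only [add_mul, map_add, h, h']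
    | tmul c d =>
      simp only [Algebra.TensorProduct.tmul_mul_tmul, betaMap_tmul, mul_one]

end Generic

section Square
variable {S R M : Type*} [CommSemiring S] [CommSemiring R] [Algebra S R]
  [AddCommMonoid M] [Module R M] 

lemma left_smul (r : R) (y : R ⊗[S] R) : r • y = (r ⊗ₜ 1) * y := by
  induction y with
  | zero => simp
  | add x x' h h' => simp only [mul_add, smul_add, h, h']
  | tmul c d => simp [smul_tmul']

lemma e_symm (e : M ≃+ R ⊗[S] R)
    (he : ∀ (r : R) (m : M), e (r • m) = (1 ⊗ₜ r) * e m) (r : R) (x : R ⊗[S] R) : e.symm ((1 ⊗ₜ r) * x) = r • e.symm x := by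
  apply e.injective
  rw [he]; simp

/-- Component of the isomorphism. -/
noncomputable def compMap (e : M ≃+ R ⊗[S] R)
    (he : ∀ (r : R) (m : M), e (r • m) = (1 ⊗ₜ r) * e m) (f : R →ₗ[S] S) : M ⊗[R] (R ⊗[S] R) →+ R ⊗[S] R :=
  TensorProduct.liftAddHom
    { toFun := fun x => (betaMap f (e x)).toAddMonoidHom
      map_zero' := by ext z; simp
      map_add' := by intro x y; ext z; simp }
    (by
      intro r x y
      rw [left_smul]
      change betaMap f (e (r • x)) y = _
      rw [he]
      exact betaMap_balanced f r (e x) y)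

lemma compMap_tmul (e : M ≃+ R ⊗[S] R)
    (he : ∀ (r : R) (m : M), e (r • m) = (1 ⊗ₜ r) * e m) (f : R →ₗ[S] S) (x : M) (y : R ⊗[S] R) :
    compMap e he f (x ⊗ₜ y) = betaMap f (e x) y := rfl

lemma inv_tmul (s : S) :
    (algebraMap S R s ⊗ₜ[S] (1 : R)) = (1 : R) ⊗ₜ algebraMap S R s := by
  have := TensorProduct.smul_tmul (R := S) s (1 : R) (1 : R)
  simpa [Algebra.smul_def] using this

/-- `a ⊗ d ↦ (a ⊗ z) ⊗ (1 ⊗ d)`. -/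
noncomputable def backMap (e : M ≃+ R ⊗[S] R)
    (he : ∀ (r : R) (m : M), e (r • m) = (1 ⊗ₜ r) * e m) (z : R) : R ⊗[S] R →+ M ⊗[R] (R ⊗[S] R) :=
  TensorProduct.liftAddHom
    { toFun := fun a =>
        { toFun := fun d => e.symm (a ⊗ₜ z) ⊗ₜ (1 ⊗ₜ d)
          map_zero' := by simp
          map_add' := by intro d d'; rw [tmul_add, tmul_add] }
      map_zero' := by apply AddMonoidHom.ext; intro d; simp
      map_add' := by intro a a'; apply AddMonoidHom.ext; intro d; simp [add_tmul] }
    (by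
      intro s a d
      change e.symm ((s • a) ⊗ₜ z) ⊗ₜ[R] (1 ⊗ₜ d) = e.symm (a ⊗ₜ z) ⊗ₜ[R] (1 ⊗ₜ (s • d))
      have h1 : (s • a) ⊗ₜ[S] z = (1 ⊗ₜ algebraMap S R s) * (a ⊗ₜ z) := by
        rw [← inv_tmul]; simp [Algebra.smul_def]
      have h2 : (1 : R) ⊗ₜ[S] (s • d) = algebraMap S R s • (1 ⊗ₜ d) := by
        rw [left_smul, inv_tmul]; simp [Algebra.smul_def]
      rw [h1, h2, e_symm e he, smul_tmul])

lemma backMap_tmul (e : M ≃+ R ⊗[S] R)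
    (he : ∀ (r : R) (m : M), e (r • m) = (1 ⊗ₜ r) * e m) (z a d : R) :
    backMap e he z (a ⊗ₜ d) = e.symm (a ⊗ₜ z) ⊗ₜ (1 ⊗ₜ d) := rfl

lemma comp_back (e : M ≃+ R ⊗[S] R)
    (he : ∀ (r : R) (m : M), e (r • m) = (1 ⊗ₜ r) * e m) (f : R →ₗ[S] S) (z : R)
    (x : R ⊗[S] R) : compMap e he f (backMap e he z x) = f z • x := by
  induction x with
  | zero => simp
  | add x x' h h' => simp only [map_add, smul_add, h, h']
  | tmul a d =>
    rw [backMap_tmul, compMap_tmul, AddEquiv.apply_symm_apply, betaMap_tmul, mul_one,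
      smul_tmul']

lemma back_smul (e : M ≃+ R ⊗[S] R)
    (he : ∀ (r : R) (m : M), e (r • m) = (1 ⊗ₜ r) * e m) (s : S) (z a d : R) :
    backMap e he z ((s • a) ⊗ₜ d) = e.symm (a ⊗ₜ (z * algebraMap S R s)) ⊗ₜ (1 ⊗ₜ d) := by
  rw [backMap_tmul, smul_tmul, Algebra.smul_def, mul_comm]

lemma back_comp (e : M ≃+ R ⊗[S] R)
    (he : ∀ (r : R) (m : M), e (r • m) = (1 ⊗ₜ r) * e m) (P D : R →ₗ[S] S) (α : R)
    (hPD : ∀ f, algebraMap S R (P f) + α * algebraMap S R (D f) = f)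
    (w : M ⊗[R] (R ⊗[S] R)) :
    backMap e he 1 (compMap e he P w) + backMap e he α (compMap e he D w) = w := by
  induction w with
  | zero => simp
  | add x y hx hy =>
    simp only [map_add]
    conv_rhs => rw [← hx, ← hy]
    abel
  | tmul m y =>
    obtain ⟨x, rfl⟩ := e.symm.surjective m
    induction x with
    | zero => simp
    | add x x' h h' =>
      simp only [map_add, add_tmul]
      conv_rhs => rw [← h, ← h']
      abel
    | tmul a b =>
      induction y with
      | zero => simp
      | add x x' h h' =>
        simp only [map_add, tmul_add]
        conv_rhs => rw [← h, ← h']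
        abel
      | tmul c d =>
        rw [compMap_tmul, compMap_tmul, AddEquiv.apply_symm_apply, betaMap_tmul, betaMap_tmul,
          back_smul, back_smul, ← add_tmul, ← map_add, ← tmul_add, one_mul, hPD]
        have h1 : a ⊗ₜ[S] (b * c) = (1 ⊗ₜ c) * (a ⊗ₜ b) := by
          simp [mul_comm]
        rw [h1, e_symm e he, smul_tmul, left_smul]
        simp

/-- The isomorphism. -/
noncomputable def sqEquiv (e : M ≃+ R ⊗[S] R)
    (he : ∀ (r : R) (m : M), e (r • m) = (1 ⊗ₜ r) * e m) (P D : R →ₗ[S] S) (α : R)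
    (hPD : ∀ f, algebraMap S R (P f) + α * algebraMap S R (D f) = f)
    (hP1 : P 1 = 1) (hPa : P α = 0) (hD1 : D 1 = 0) (hDa : D α = 1) :
    M ⊗[R] (R ⊗[S] R) ≃+ (R ⊗[S] R) × (R ⊗[S] R) where
  toFun w := (compMap e he P w, compMap e he D w)
  invFun p := backMap e he 1 p.1 + backMap e he α p.2
  left_inv w := back_comp e he P D α hPD w
  right_inv p := by
    simp only [map_add, comp_back, hP1, hPa, hD1, hDa, one_smul,
      zero_smul, add_zero, zero_add]
  map_add' x y := by simp only [map_add, Prod.mk_add_mk]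

end Square

section Concrete
variable (n i : ℕ) (hi : i + 1 < n)

/-- The simple root. -/
noncomputable def rootA : PolyQ n := X ⟨i, Nat.lt_of_succ_lt hi⟩ - X ⟨i + 1, hi⟩

lemma rootA_ne : rootA n i hi ≠ 0 := by
  unfold rootA
  rw [sub_ne_zero]
  intro h
  have := X_injective h
  simp at this

lemma adjSwap_rootA : adjSwap n i hi (rootA n i hi) = - rootA n i hi := by
  simp [adjSwap, rootA]

lemma adjSwap_invol (f : PolyQ n) : adjSwap n i hi (adjSwap n i hi f) = f := by
  have h : ∀ a b : Fin n, (Equiv.swap a b : Fin n → Fin n) ∘ (Equiv.swap a b) = id := by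
    intro a b; ext x; simp
  simp only [adjSwap, renameEquiv_apply, rename_rename, h, rename_id_apply]

lemma mem_inv (f : PolyQ n) : f ∈ invariants n i hi ↔ adjSwap n i hi f = f := Iff.rfl

lemma exists_quot (f : PolyQ n) : ∃ g, f - adjSwap n i hi f = rootA n i hi * g := by
  induction f using MvPolynomial.induction_on with
  | C a => exact ⟨0, by simp [adjSwap]⟩
  | add p q hp hq =>
    obtain ⟨g, hg⟩ := hp
    obtain ⟨g', hg'⟩ := hq
    exact ⟨g + g', by rw [map_add, mul_add, ← hg, ← hg']; ring⟩
  | mul_X p j hp =>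
    obtain ⟨g, hg⟩ := hp
    have hX : ∃ c, (X j : PolyQ n) - adjSwap n i hi (X j) = rootA n i hi * c := by
      simp only [adjSwap, renameEquiv_apply, rename_X, rootA]
      rcases eq_or_ne j ⟨i, Nat.lt_of_succ_lt hi⟩ with rfl | h1
      · exact ⟨1, by simp⟩
      rcases eq_or_ne j ⟨i + 1, hi⟩ with rfl | h2
      · exact ⟨-1, by simp⟩
      · exact ⟨0, by rw [Equiv.swap_apply_of_ne_of_ne h1 h2]; simp⟩
    obtain ⟨c, hc⟩ := hX
    refine ⟨g * X j + adjSwap n i hi p * c, ?_⟩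
    rw [map_mul]
    linear_combination (X j) * hg + adjSwap n i hi p * hc

/-- Half of the Demazure quotient. -/
noncomputable def demF (f : PolyQ n) : PolyQ n := C (1/2) * (exists_quot n i hi f).choose

lemma two_C : (2 : PolyQ n) * C (1/2) = 1 := by
  have : (2 : PolyQ n) = C 2 := (map_ofNat C 2).symm
  rw [this, ← C_mul]; norm_num

lemma demF_spec (f : PolyQ n) :
    2 * (rootA n i hi * demF n i hi f) = f - adjSwap n i hi f := by
  rw [(exists_quot n i hi f).choose_spec, demF]
  linear_combination (rootA n i hi * (exists_quot n i hi f).choose) * two_C n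

lemma demF_unique (f g : PolyQ n) (h : 2 * (rootA n i hi * g) = f - adjSwap n i hi f) :
    demF n i hi f = g := by
  have h2 : (2 : PolyQ n) ≠ 0 := two_ne_zero
  exact mul_left_cancel₀ (rootA_ne n i hi)
    (mul_left_cancel₀ h2 ((demF_spec n i hi f).trans h.symm))

lemma demF_mem (f : PolyQ n) : demF n i hi f ∈ invariants n i hi := by
  rw [mem_inv]
  symm
  apply demF_unique
  have h := congrArg (adjSwap n i hi) (demF_spec n i hi f)
  simp only [map_mul, map_sub, adjSwap_rootA, adjSwap_invol, map_ofNat] at h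
  linear_combination -h

/-- Odd part. -/
noncomputable def demD : PolyQ n →ₗ[invariants n i hi] invariants n i hi where
  toFun f := ⟨demF n i hi f, demF_mem n i hi f⟩
  map_add' f g := by
    apply Subtype.ext
    apply demF_unique
    have h := demF_spec n i hi f
    have h' := demF_spec n i hi g
    simp only [Subalgebra.coe_add, map_add]
    linear_combination h + h'
  map_smul' s f := by
    apply Subtype.ext
    apply demF_unique
    have h := demF_spec n i hi f
    have hs : adjSwap n i hi s.1 = s.1 := s.2
    change 2 * (rootA n i hi * (s.1 * demF n i hi f)) = s.1 * f - adjSwap n i hi (s.1 * f)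
    rw [map_mul, hs]
    linear_combination s.1 * h

/-- Even part. -/
noncomputable def demP : PolyQ n →ₗ[invariants n i hi] invariants n i hi where
  toFun f := ⟨C (1/2) * (f + adjSwap n i hi f), by
    rw [mem_inv, map_mul, map_add, adjSwap_invol, add_comm]
    congr 1
    simp [adjSwap]⟩
  map_add' f g := by
    apply Subtype.ext
    simp only [Subalgebra.coe_add, map_add]
    ring
  map_smul' s f := by
    apply Subtype.ext
    have hs : adjSwap n i hi s.1 = s.1 := s.2
    change C (1/2) * (s.1 * f + adjSwap n i hi (s.1 * f))
      = s.1 * (C (1/2) * (f + adjSwap n i hi f))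
    rw [map_mul, hs]
    ring

lemma dem_decomp (f : PolyQ n) :
    ((demP n i hi f : invariants n i hi) : PolyQ n)
      + rootA n i hi * (demD n i hi f : invariants n i hi) = f := by
  change C (1/2) * (f + adjSwap n i hi f) + rootA n i hi * demF n i hi f = f
  have h := demF_spec n i hi f
  linear_combination C (1/2) * h + (f - rootA n i hi * demF n i hi f) * two_C n

lemma demD_one : demD n i hi 1 = 0 := by
  apply Subtype.ext
  apply demF_unique
  simp

lemma demD_root : demD n i hi (rootA n i hi) = 1 := by
  apply Subtype.ext
  apply demF_unique
  rw [adjSwap_rootA]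
  simp only [Subalgebra.coe_one]
  ring

lemma demP_one : demP n i hi 1 = 1 := by
  apply Subtype.ext
  change C (1/2) * (1 + adjSwap n i hi 1) = 1
  rw [map_one]
  linear_combination two_C n

lemma demP_root : demP n i hi (rootA n i hi) = 0 := by
  apply Subtype.ext
  change C (1/2) * (_ + adjSwap n i hi _) = 0
  rw [adjSwap_rootA]
  ring

/-- The isomorphism. -/
noncomputable def bsEquiv : BSTensorBS n i hi ≃+ BS n i hi × BS n i hi :=
  @sqEquiv (invariants n i hi) (PolyQ n) (BS n i hi) _ _ _ _ (rightMod n i hi)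
    (AddEquiv.refl _) (fun _ _ => rfl) (demP n i hi) (demD n i hi) (rootA n i hi)
    (dem_decomp n i hi) (demP_one n i hi) (demP_root n i hi) (demD_one n i hi) (demD_root n i hi)

end Concrete

/-- There is an isomorphism `Bᵢ ⊗_R Bᵢ ≅ Bᵢ ⊕ Bᵢ` which is simultaneously
left `R`-linear and right `R`-linear (an isomorphism of `(R,R)`-bimodules), where the
tensor product is taken with respect to the right `R`-action on the first factor and the
left `R`-action on the second, and the left (resp. right) `R`-action on
`Bᵢ = R ⊗_{R^{σᵢ}} R` is multiplication in the first (resp. second) tensor factor,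
componentwise on the direct sum. -/
theorem bott_samelson_tensor_square (n : ℕ) (hn : 2 ≤ n) (i : ℕ) (hi : i + 1 < n) :
    ∃ e : BSTensorBS n i hi ≃+ BS n i hi × BS n i hi,
      (∀ (r : PolyQ n) (x y : BS n i hi),
          e (bsTmul n i hi (incL n i hi r * x) y)
            = (incL n i hi r * (e (bsTmul n i hi x y)).1,
               incL n i hi r * (e (bsTmul n i hi x y)).2)) ∧
      (∀ (r : PolyQ n) (x y : BS n i hi),
          e (bsTmul n i hi x (y * incR n i hi r))
            = ((e (bsTmul n i hi x y)).1 * incR n i hi r,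
               (e (bsTmul n i hi x y)).2 * incR n i hi r)) := by
  refine ⟨bsEquiv n i hi, fun r x y => ?_, fun r x y => ?_⟩
  · exact Prod.ext (betaMap_left _ r x y) (betaMap_left _ r x y)
  · exact Prod.ext (betaMap_right _ r x y) (betaMap_right _ r x y)
end
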